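/- Let (X,d,μ) be a metric measure space with finite Hausdorff dimension. Suppose that μ(S ∩ ind φ) = 0 for every n ∈ ℕ, every Lipschitz φ : X → ℝⁿ and every S ∈ 𝒮(φ). Then (X,d,μ) is a Lipschitz differentiability space, and the charts can be chosen with every chart dimension n_i ≤ dim_H X. -/

import Mathlib

open MeasureTheory Metric Set Filter Topology ENNReal NNReal
open scoped RealInnerProductSpace

noncomputable section

namespace BKO

/-- `ℝⁿ` with the Euclidean metric. -/
abbrev E (n : ℕ) : Type := EuclideanSpace ℝ (Fin n)

variable {X : Type*} [MetricSpace X]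

/-- A set `G ⊆ ℝ × X` is the graph of a curve fragment if all first coordinates lie
in `[0,1]` and it is the graph of a `2`-biLipschitz function defined on a subset of `[0,1]`. -/
def IsFragmentGraph (X : Type*) [MetricSpace X] (G : Set (ℝ × X)) : Prop :=
  (∀ p ∈ G, p.1 ∈ Set.Icc (0:ℝ) 1) ∧
  ∀ p ∈ G, ∀ q ∈ G, |p.1 - q.1| ≤ 2 * dist p.2 q.2 ∧ dist p.2 q.2 ≤ 2 * |p.1 - q.1|

/-- The space `Γ(X)` of curve fragments, identified with their graphs (nonempty compact
subsets of `[0,1] × X`), with the Hausdorff metric `d_Γ(γ₁,γ₂) = d_H(gr γ₁, gr γ₂)`. -/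
def Fragment (X : Type*) [MetricSpace X] : Type _ :=
  {G : TopologicalSpace.NonemptyCompacts (ℝ × X) // IsFragmentGraph X (G : Set (ℝ × X))}

instance : MetricSpace (Fragment X) :=
  inferInstanceAs (MetricSpace {G : TopologicalSpace.NonemptyCompacts (ℝ × X) // _})

instance : MeasurableSpace (Fragment X) := borel _
instance : BorelSpace (Fragment X) := ⟨rfl⟩

namespace Fragment

/-- The graph of a curve fragment. -/
def graph (γ : Fragment X) : Set (ℝ × X) := (γ.1 : Set (ℝ × X))

/-- The (compact) domain of a curve fragment. -/
def dom (γ : Fragment X) : Set ℝ := Prod.fst '' γ.graph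

/-- The image of a curve fragment. -/
def im (γ : Fragment X) : Set X := Prod.snd '' γ.graph

/-- The function `dom γ → X` determined by the graph (junk value off the domain). -/
def fn (γ : Fragment X) (t : ℝ) : X :=
  @dite X (∃ x, (t, x) ∈ γ.graph) (Classical.dec _)
    (fun h => h.choose) (fun _ => γ.1.nonempty.choose.2)

/-- `γ_* 𝓛¹`: the pushforward under `γ` of Lebesgue measure restricted to `dom γ`. -/
def measure [MeasurableSpace X] (γ : Fragment X) : Measure X :=
  (volume.restrict γ.dom).map γ.fn

end Fragment

/-- The measure `ν(ℙ)`, `ν(ℙ)(B) = ∫ γ_*𝓛¹(B) dℙ(γ)`. -/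
def nu [MeasurableSpace X] (ℙ : Measure (Fragment X)) : Measure X :=
  ℙ.bind Fragment.measure

/-- The cone `C(w,θ) = {v : |⟨v,w⟩| ≥ θ‖v‖}`. -/
def cone {n : ℕ} (w : E n) (θ : ℝ) : Set (E n) := {v | θ * ‖v‖ ≤ |⟪v, w⟫|}

/-- A cone in `ℝⁿ` is a set of the form `C(w,θ)` with `w ∈ Sⁿ⁻¹`, `θ ∈ (0,1)`. -/
def IsCone {n : ℕ} (C : Set (E n)) : Prop :=
  ∃ (w : E n) (θ : ℝ), ‖w‖ = 1 ∧ θ ∈ Set.Ioo (0:ℝ) 1 ∧ C = cone w θ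

/-- `γ` is a `C`-curve with respect to `φ`. -/
def IsConeCurve {n : ℕ} (φ : X → E n) (C : Set (E n)) (γ : Fragment X) : Prop :=
  ∃ δ > (0:ℝ), ∀ p ∈ γ.graph, ∀ q ∈ γ.graph,
    φ p.2 - φ q.2 ∈ C \ Metric.ball 0 (δ * |p.1 - q.1|)

/-- `ℙ` is a `C`-Alberti representation of `μ` with respect to `φ`. -/
def IsConeAlbertiRep [MeasurableSpace X] {n : ℕ} (μ : Measure X) (φ : X → E n)
    (C : Set (E n)) (ℙ : Measure (Fragment X)) : Prop :=
  IsProbabilityMeasure ℙ ∧ μ ≪ nu ℙ ∧ ∀ᵐ γ ∂ℙ, IsConeCurve φ C γ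

/-- `S` is `C`-null with respect to `φ`: every `C`-curve meets `S` in `𝓗¹`-measure zero. -/
def ConeNull [MeasurableSpace X] [BorelSpace X] {n : ℕ} (φ : X → E n) (C : Set (E n))
    (S : Set X) : Prop :=
  ∀ γ : Fragment X, IsConeCurve φ C γ → μH[1] (γ.im ∩ S) = 0

/-- Cones `C₁,…,C_m` are independent. -/
def IndepCones {n m : ℕ} (C : Fin m → Set (E n)) : Prop :=
  ∀ v : Fin m → E n, (∀ i, v i ∈ C i ∧ v i ≠ 0) → LinearIndependent ℝ v

/-- `μ` has `n` independent Alberti representations. -/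
def HasIndepAlberti [MeasurableSpace X] (μ : Measure X) (n : ℕ) : Prop :=
  ∃ φ : X → E n, (∃ K, LipschitzWith K φ) ∧ ∃ C : Fin n → Set (E n),
    (∀ i, IsCone (C i)) ∧ IndepCones C ∧ ∀ i, ∃ ℙ, IsConeAlbertiRep μ φ (C i) ℙ

/-- The collection `𝒮(φ)` of singular sets. -/
def MemScal [MeasurableSpace X] [BorelSpace X] {n : ℕ} (φ : X → E n) (S : Set X) : Prop :=
  MeasurableSet S ∧ ∀ θ ∈ Set.Ioo (0:ℝ) 1, ∃ (m : ℕ) (S' : Fin m → Set X) (w : Fin m → E n),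
    S = (⋃ i, S' i) ∧ ∀ i, MeasurableSet (S' i) ∧ ‖w i‖ = 1 ∧ ConeNull φ (cone (w i) θ) (S' i)

/-- `Lip(f,x) = limsup_{r→0⁺} sup_{d(x,y)≤r} |f(y)-f(x)|/r`. -/
def lipAt (f : X → ℝ) (x : X) : ℝ :=
  Filter.limsup (fun r : ℝ => sSup ((fun y => |f y - f x| / r) '' Metric.closedBall x r))
    (𝓝[>] (0:ℝ))

/-- `ind φ = {x : Lip(D⬝φ, x) > 0 for all D ∈ Sⁿ⁻¹}`. -/
def indSet {n : ℕ} (φ : X → E n) : Set X :=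
  {x | ∀ D : E n, ‖D‖ = 1 → 0 < lipAt (fun y => ⟪φ y, D⟫) x}

/-- `f` is differentiable with respect to `φ` at `x₀`, with a unique derivative. -/
def DiffWrtAt {n : ℕ} (φ : X → E n) (f : X → ℝ) (x₀ : X) : Prop :=
  ∃! L : E n →ₗ[ℝ] ℝ,
    Filter.Tendsto (fun x => |f x - f x₀ - L (φ x - φ x₀)| / dist x x₀) (𝓝[≠] x₀) (𝓝 0)

/-- `(X,d,μ)` is a Lipschitz differentiability space, with all chart dimensions
satisfying the predicate `P`. -/
def IsLipDiffSpaceWith [MeasurableSpace X] (μ : Measure X) (P : ℕ → Prop) : Prop :=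
  ∃ (N : ℕ → ℕ) (U : ℕ → Set X) (φ : (i : ℕ) → X → E (N i)),
    (∀ i, P (N i)) ∧ (∀ i, MeasurableSet (U i)) ∧ (⋃ i, U i) = Set.univ ∧
    (∀ i, ∃ K, LipschitzWith K (φ i)) ∧
    ∀ f : X → ℝ, (∃ K, LipschitzWith K f) →
      ∀ i, ∀ᵐ x ∂μ, x ∈ U i → DiffWrtAt (φ i) f x

/-- `ρ` is an upper gradient of `f`. -/
def IsUpperGradient (f ρ : X → ℝ) : Prop :=
  ∀ γ : ℝ → X, LipschitzOnWith 1 γ (Set.Icc 0 1) →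
    |f (γ 1) - f (γ 0)| ≤ ∫ t in Set.Icc (0:ℝ) 1, ρ (γ t)

/-- `ρ` is a `*`-upper gradient of `f`. -/
def IsStarUpperGradient (f ρ : X → ℝ) : Prop :=
  ∀ γ : Fragment X, LipschitzOnWith 1 γ.fn γ.dom →
    ∀ᵐ t ∂(volume.restrict γ.dom),
      ∀ v : ℝ, HasDerivWithinAt (f ∘ γ.fn) v γ.dom t → |v| ≤ ρ (γ.fn t)

/-- The dyadic cube of side length `2^{-m}` in `[0,1)ⁿ` indexed by `k`. -/
def dyadicCube (n m : ℕ) (k : Fin n → Fin (2 ^ m)) : Set (E n) :=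
  {x | ∀ i, (k i : ℝ) / 2 ^ m ≤ x i ∧ x i < ((k i : ℝ) + 1) / 2 ^ m}

/-- A discrete Loomis–Whitney inequality: `g i` does not depend on the `i`-th coordinate and
`G i` bounds its sum over the remaining ones. -/
lemma sum_prod_rpow_le_of_update_eq {n : ℕ} (hn : 2 ≤ n) (L : ℕ)
    (g : Fin n → (Fin n → Fin L) → ℝ≥0∞) (G : Fin n → ℝ≥0∞)
    (hg : ∀ i x t, g i (Function.update x i t) = g i x)
    (hGtop : ∀ i, G i ≠ ⊤)
    (hG : ∀ i, ∑ x, g i x ≤ L * G i) :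
    ∑ x, ∏ i, g i x ^ (1 / ((n : ℝ) - 1)) ≤
      (n : ℝ≥0∞) ^ ((n : ℝ) / (n - 1)) * ∏ i, G i ^ (1 / ((n : ℝ) - 1)) := by
  have hn1 : (1 : ℝ) < n := by exact_mod_cast hn
  set q : ℝ := 1 / ((n : ℝ) - 1) with hq
  have hq0 : 0 < q := by rw [hq]; apply one_div_pos.2; linarith
  rcases Nat.eq_zero_or_pos L with rfl | hL
  · have : IsEmpty (Fin n → Fin 0) := ⟨fun x => (x ⟨0, by omega⟩).elim0⟩
    simp
  by_cases hz : ∃ i, G i = 0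
  · obtain ⟨i, hi⟩ := hz
    have h0 : ∀ x, g i x = 0 := by
      have := hG i
      rw [hi, mul_zero, nonpos_iff_eq_zero, Finset.sum_eq_zero_iff] at this
      exact fun x => this x (Finset.mem_univ _)
    have : ∑ x, ∏ i, g i x ^ q = 0 := by
      refine Finset.sum_eq_zero fun x _ => Finset.prod_eq_zero (Finset.mem_univ i) ?_
      rw [h0, ENNReal.zero_rpow_of_pos hq0]
    rw [this]; exact zero_le
  push Not at hz
  have hpconj : Real.HolderConjugate (Fintype.card (Fin n)) ((n : ℝ) / (n - 1)) := by
    rw [Fintype.card_fin]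
    exact Real.HolderConjugate.conjExponent hn1
  have key := lintegral_prod_lintegral_pow_le (ι := Fin n) (A := fun _ => Fin L)
    (fun _ => Measure.count) hpconj (f := fun x => ∑ i, (G i)⁻¹ * g i x)
    (measurable_of_finite _)
  simp only [lintegral_fintype, Measure.pi_singleton, Measure.count_singleton, mul_one,
    Finset.prod_const_one, Fintype.card_fin] at key
  have hLn : (L : ℝ≥0∞) ≠ 0 := by exact_mod_cast hL.ne'
  have hpq : ((n : ℝ) / (n - 1)) = n * q := by rw [hq]; ring
  have hP0 : ∏ i, G i ^ q ≠ 0 := Finset.prod_ne_zero_iff.2 fun i _ => by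
    simp [hz i, hGtop i]
  have hPt : ∏ i, G i ^ q ≠ ⊤ := ENNReal.prod_ne_top fun i _ =>
    ENNReal.rpow_ne_top_of_nonneg hq0.le (hGtop i)
  have hLt : ((L : ℝ≥0∞) ^ ((n : ℝ) * q)) ≠ ⊤ :=
    ENNReal.rpow_ne_top_of_nonneg (by positivity) (by simp)
  have hL0 : ((L : ℝ≥0∞) ^ ((n : ℝ) * q)) ≠ 0 := by
    simp [hLn]
  have lower : (L : ℝ≥0∞) ^ ((n : ℝ) * q) * ((∏ i, G i ^ q)⁻¹ * ∑ x, ∏ i, g i x ^ q) ≤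
      ∑ x : Fin n → Fin L, ∏ i, (∑ t, ∑ j, (G j)⁻¹ * g j (Function.update x i t)) ^ q := by
    rw [Finset.mul_sum, Finset.mul_sum]
    refine Finset.sum_le_sum fun x _ => ?_
    have : (L : ℝ≥0∞) ^ ((n : ℝ) * q) * ((∏ i, G i ^ q)⁻¹ * ∏ i, g i x ^ q) =
        ∏ i, (L * ((G i)⁻¹ * g i x)) ^ q := by
      simp only [ENNReal.mul_rpow_of_nonneg _ _ hq0.le, Finset.prod_mul_distrib]
      congr 1
      · rw [Finset.prod_const, Finset.card_univ, Fintype.card_fin, ← ENNReal.rpow_natCast,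
          ← ENNReal.rpow_mul, mul_comm]
      · congr 1
        rw [ENNReal.prod_inv_distrib]
        · exact Finset.prod_congr rfl fun i _ => (ENNReal.inv_rpow _ _).symm
        · intro i _ j _ _
          left; simp [hz i, hGtop i]
    rw [this]
    refine Finset.prod_le_prod' fun i _ => ENNReal.rpow_le_rpow ?_ hq0.le
    calc (L : ℝ≥0∞) * ((G i)⁻¹ * g i x) = ∑ t : Fin L, (G i)⁻¹ * g i (Function.update x i t) := by
          simp [hg]
      _ ≤ _ := Finset.sum_le_sum fun t _ =>
          Finset.single_le_sum (f := fun j => (G j)⁻¹ * g j (Function.update x i t))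
            (fun _ _ => zero_le) (Finset.mem_univ i)
  have upper : ∑ x, ∑ i, (G i)⁻¹ * g i x ≤ n * L := by
    rw [Finset.sum_comm]
    calc ∑ i, ∑ x, (G i)⁻¹ * g i x ≤ ∑ i : Fin n, (L : ℝ≥0∞) := by
          refine Finset.sum_le_sum fun i _ => ?_
          rw [← Finset.mul_sum]
          calc (G i)⁻¹ * ∑ x, g i x ≤ (G i)⁻¹ * (L * G i) := by gcongr; exact hG i
            _ = L * ((G i)⁻¹ * G i) := by ring
            _ = L := by rw [ENNReal.inv_mul_cancel (hz i) (hGtop i), mul_one]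
      _ = n * L := by simp
  have all : (L : ℝ≥0∞) ^ ((n : ℝ) * q) * ((∏ i, G i ^ q)⁻¹ * ∑ x, ∏ i, g i x ^ q) ≤
      (L : ℝ≥0∞) ^ ((n : ℝ) * q) * (n : ℝ≥0∞) ^ ((n : ℝ) * q) := by
    refine (lower.trans key).trans ?_
    rw [hpq, mul_comm ((L : ℝ≥0∞) ^ _), ← ENNReal.mul_rpow_of_nonneg _ _ (by positivity)]
    exact ENNReal.rpow_le_rpow upper (by positivity)
  rw [ENNReal.mul_le_mul_iff_right hL0 hLt] at all
  rw [hpq]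
  calc ∑ x, ∏ i, g i x ^ q = (∏ i, G i ^ q) * ((∏ i, G i ^ q)⁻¹ * ∑ x, ∏ i, g i x ^ q) := by
        rw [← mul_assoc, ENNReal.mul_inv_cancel hP0 hPt, one_mul]
    _ ≤ _ := by rw [mul_comm ((n : ℝ≥0∞) ^ _)]; gcongr

/-- The cell of side `r` of the standard grid containing `b p`. -/
def gridCell {P : Type*} {n : ℕ} (b : P → Fin n → ℝ) (r : ℝ) (p : P) : Fin n → ℤ :=
  fun i => ⌊b p i / r⌋

open Classical in
/-- The members of `𝒯` meeting the grid cell `c`. -/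
def hits {P : Type*} {n : ℕ} (b : P → Fin n → ℝ) (r : ℝ) (𝒯 : Finset (Finset P))
    (c : Fin n → ℤ) : Finset (Finset P) :=
  𝒯.filter fun T => ∃ p ∈ T, gridCell b r p = c

/-- The loss in one change of scale in the multilinear Kakeya inequality. -/
def kakeyaConst (n : ℕ) : ℝ≥0∞ :=
  (n : ℝ≥0∞) ^ ((n : ℝ) / (n - 1)) * ∏ _i : Fin n, ((5 : ℝ≥0∞) ^ n) ^ (1 / ((n : ℝ) - 1))

lemma gridCell_mul {P : Type*} {n : ℕ} (b : P → Fin n → ℝ) (r : ℝ) (L : ℕ) (p : P) (i : Fin n) :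
    gridCell b (L * r) p i = gridCell b r p i / L := by
  unfold gridCell
  rw [mul_comm, ← div_div, Int.floor_div_natCast]

lemma abs_sub_lt_of_gridCell_eq {P : Type*} {n : ℕ} {b : P → Fin n → ℝ} {r : ℝ} (hr : 0 < r)
    {p q : P} {i : Fin n} (h : gridCell b r p i = gridCell b r q i) : |b p i - b q i| < r := by
  have := Int.abs_sub_lt_one_of_floor_eq_floor h
  rwa [← _root_.sub_div, abs_div, abs_of_pos hr, div_lt_one hr] at this

lemma abs_gridCell_sub_le {P : Type*} {n : ℕ} {b : P → Fin n → ℝ} {r : ℝ} (hr : 0 < r)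
    {p q : P} {i : Fin n} (h : |b p i - b q i| ≤ 2 * r) :
    |gridCell b r p i - gridCell b r q i| ≤ 2 := by
  rw [abs_le] at h ⊢
  have h1 : b p i / r ≤ b q i / r + (2 : ℤ) := by
    rw [← sub_le_iff_le_add', ← _root_.sub_div, div_le_iff₀ hr]; push_cast; linarith
  have h2 : b q i / r ≤ b p i / r + (2 : ℤ) := by
    rw [← sub_le_iff_le_add', ← _root_.sub_div, div_le_iff₀ hr]; push_cast; linarith
  have h1 := Int.floor_mono h1
  have h2 := Int.floor_mono h2
  rw [Int.floor_add_intCast] at h1 h2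
  unfold gridCell
  constructor <;> linarith

lemma card_near_line_le {n L : ℕ} (j : Fin n) (u z : Fin n → ℤ) :
    (Finset.univ.filter fun x : Fin n → Fin L =>
      ∀ i, i ≠ j → |u i + (x i : ℤ) - z i| ≤ 2).card ≤ L * 5 ^ n := by
  classical
  have hsub : (Finset.univ.filter fun x : Fin n → Fin L =>
      ∀ i, i ≠ j → |u i + (x i : ℤ) - z i| ≤ 2) ⊆ Fintype.piFinset fun i =>
        if i = j then Finset.univ else Finset.univ.filter fun y : Fin L =>
          |u i + (y : ℤ) - z i| ≤ 2 := by
    intro x hx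
    rw [Fintype.mem_piFinset]
    intro i
    by_cases hi : i = j
    · simp [hi]
    · simpa [hi] using (Finset.mem_filter.1 hx).2 i hi
  refine (Finset.card_le_card hsub).trans ?_
  rw [Fintype.card_piFinset, ← Finset.mul_prod_erase _ _ (Finset.mem_univ j)]
  gcongr
  · simp
  · calc _ ≤ ∏ i ∈ Finset.univ.erase j, 5 := by
          refine Finset.prod_le_prod' fun i hi => ?_
          rw [if_neg (Finset.ne_of_mem_erase hi)]
          have : (Finset.univ.filter fun y : Fin L => |u i + (y : ℤ) - z i| ≤ 2).card ≤
              (Finset.Icc (z i - u i - 2) (z i - u i + 2)).card := by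
            refine Finset.card_le_card_of_injOn (fun y => (y : ℤ)) ?_ ?_
            · intro y hy
              have := (Finset.mem_filter.1 hy).2
              rw [abs_le] at this
              simp only [Finset.coe_Icc, Set.mem_Icc]
              constructor <;> linarith
            · intro a _ b _ hab
              simpa [Fin.ext_iff] using hab
          refine this.trans ?_
          rw [Int.card_Icc]
          omega
      _ ≤ 5 ^ n := by
          rw [Finset.prod_const]
          refine Nat.pow_le_pow_right (by norm_num) ?_
          exact (Finset.card_le_univ _).trans (by simp)

/-- Within one cell of side `L * r`, a tube family looks axis-parallel at scale `r`. -/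
lemma sum_prod_hits_fiber_le {P : Type*} {n : ℕ} (hn : 2 ≤ n) (b : P → Fin n → ℝ) {L : ℕ}
    (hL : 0 < L) {r : ℝ} (hr : 1 ≤ r) (𝒯 : Fin n → Finset (Finset P))
    (h𝒯 : ∀ j, ∀ T ∈ 𝒯 j, ∀ p ∈ T, ∀ q ∈ T, ∀ i, i ≠ j →
      |b p i - b q i| ≤ |b p j - b q j| / L + 1)
    (c' : Fin n → ℤ) (C : Finset (Fin n → ℤ)) (hC : ∀ c ∈ C, ∀ i, c i / L = c' i) :
    ∑ c ∈ C, ∏ j, ((hits b r (𝒯 j) c).card : ℝ≥0∞) ^ (1 / ((n : ℝ) - 1)) ≤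
      kakeyaConst n *
        ∏ j, ((hits b (L * r) (𝒯 j) c').card : ℝ≥0∞) ^ (1 / ((n : ℝ) - 1)) := by
  classical
  have hn1 : (1 : ℝ) < n := by exact_mod_cast hn
  have hr0 : 0 < r := by linarith
  have hLR : (0 : ℝ) < L := by exact_mod_cast hL
  set q : ℝ := 1 / ((n : ℝ) - 1) with hq
  have hq0 : 0 ≤ q := by rw [hq]; apply one_div_nonneg.2; linarith
  let dig : (Fin n → ℤ) → Fin n → Fin L := fun c i =>
    ⟨(c i % L).toNat, by
      have h1 := Int.emod_nonneg (c i) (by exact_mod_cast hL.ne' : (L : ℤ) ≠ 0)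
      have h2 := Int.emod_lt_of_pos (c i) (by exact_mod_cast hL : (0 : ℤ) < L)
      omega⟩
  have hdig : ∀ c ∈ C, ∀ i, c i = L * c' i + (dig c i : ℕ) := by
    intro c hc i
    have h1 := Int.emod_nonneg (c i) (by exact_mod_cast hL.ne' : (L : ℤ) ≠ 0)
    have h3 := Int.mul_ediv_add_emod (c i) L
    rw [hC c hc i] at h3
    simp only [dig]
    rw [Int.toNat_of_nonneg h1]
    exact h3.symm
  let und : (Fin n → Fin L) → Fin n → ℤ := fun x i => L * c' i + (x i : ℕ)
  have hund : ∀ c ∈ C, und (dig c) = c := fun c hc => funext fun i => (hdig c hc i).symm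
  have hundhit : ∀ x p, gridCell b r p = und x → gridCell b (L * r) p = c' := by
    intro x p hp
    funext i
    rw [gridCell_mul, hp]
    simp only [und]
    rw [add_comm, Int.add_mul_ediv_left _ _ (by exact_mod_cast hL.ne')]
    rw [Int.ediv_eq_zero_of_lt (by positivity) (by exact_mod_cast (x i).2)]
    simp
  -- a representative point of each tube in the large cell
  have hrep : ∀ j, ∀ T : Finset P, ∃ z : Fin n → ℤ, T ∈ hits b (L * r) (𝒯 j) c' →
      ∃ p ∈ T, gridCell b (L * r) p = c' ∧ gridCell b r p = z := by
    intro j T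
    by_cases hT : T ∈ hits b (L * r) (𝒯 j) c'
    · obtain ⟨p, hp, hpc⟩ := (Finset.mem_filter.1 hT).2
      exact ⟨gridCell b r p, fun _ => ⟨p, hp, hpc, rfl⟩⟩
    · exact ⟨0, fun h => absurd h hT⟩
  choose z hz using hrep
  let g : Fin n → (Fin n → Fin L) → ℝ≥0∞ := fun j x =>
    ∑ T ∈ hits b (L * r) (𝒯 j) c',
      if ∀ i, i ≠ j → |L * c' i + ((x i : ℕ) : ℤ) - z j T i| ≤ 2 then 1 else 0
  have hhits : ∀ j x, ((hits b r (𝒯 j) (und x)).card : ℝ≥0∞) ≤ g j x := by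
    intro j x
    have hsub : hits b r (𝒯 j) (und x) ⊆ (hits b (L * r) (𝒯 j) c').filter fun T =>
        ∀ i, i ≠ j → |L * c' i + ((x i : ℕ) : ℤ) - z j T i| ≤ 2 := by
      intro T hT
      obtain ⟨hT1, p, hp, hpc⟩ := Finset.mem_filter.1 hT
      have hpc' := hundhit x p hpc
      have hTm : T ∈ hits b (L * r) (𝒯 j) c' := Finset.mem_filter.2 ⟨hT1, p, hp, hpc'⟩
      refine Finset.mem_filter.2 ⟨hTm, fun i hi => ?_⟩
      obtain ⟨p', hp', hpc2, hpz⟩ := hz j T hTm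
      have hcell : |b p j - b p' j| < L * r :=
        abs_sub_lt_of_gridCell_eq (by positivity) (by rw [hpc', hpc2])
      have h1 := h𝒯 j T hT1 p hp p' hp' i hi
      have h2 : |b p j - b p' j| / L ≤ r := by
        rw [div_le_iff₀ hLR]; linarith
      have h3 := abs_gridCell_sub_le hr0 (h1.trans (by linarith) : |b p i - b p' i| ≤ 2 * r)
      rw [hpc, hpz] at h3
      exact h3
    simp only [g]
    rw [Finset.sum_boole]
    exact Nat.cast_le.2 (Finset.card_le_card hsub)
  calc ∑ c ∈ C, ∏ j, ((hits b r (𝒯 j) c).card : ℝ≥0∞) ^ q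
      = ∑ c ∈ C, ∏ j, ((hits b r (𝒯 j) (und (dig c))).card : ℝ≥0∞) ^ q :=
        Finset.sum_congr rfl fun c hc => by rw [hund c hc]
    _ = ∑ x ∈ C.image dig, ∏ j, ((hits b r (𝒯 j) (und x)).card : ℝ≥0∞) ^ q := by
        rw [Finset.sum_image]
        intro c hc d hd hcd
        rw [← hund c hc, ← hund d hd, hcd]
    _ ≤ ∑ x, ∏ j, ((hits b r (𝒯 j) (und x)).card : ℝ≥0∞) ^ q :=
        Finset.sum_le_sum_of_subset (Finset.subset_univ _)
    _ ≤ ∑ x, ∏ j, g j x ^ q :=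
        Finset.sum_le_sum fun x _ => Finset.prod_le_prod' fun j _ =>
          ENNReal.rpow_le_rpow (hhits j x) hq0
    _ ≤ (n : ℝ≥0∞) ^ ((n : ℝ) / (n - 1)) *
          ∏ j, ((5 : ℝ≥0∞) ^ n * (hits b (L * r) (𝒯 j) c').card) ^ q := by
        refine sum_prod_rpow_le_of_update_eq hn L g _ ?_ ?_ ?_
        · intro j x t
          refine Finset.sum_congr rfl fun T _ => ?_
          congr 1
          refine propext (forall_congr' fun i => ?_)
          refine imp_congr_right fun hi => ?_
          rw [Function.update_of_ne hi]
        · intro j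
          exact ENNReal.mul_ne_top (by simp) (by simp)
        · intro j
          simp only [g]
          rw [Finset.sum_comm]
          calc _ ≤ ∑ T ∈ hits b (L * r) (𝒯 j) c', (L * 5 ^ n : ℝ≥0∞) := by
                refine Finset.sum_le_sum fun T _ => ?_
                rw [Finset.sum_boole]
                exact_mod_cast card_near_line_le j (fun i => L * c' i) (z j T)
            _ = _ := by rw [Finset.sum_const, nsmul_eq_mul]; ring
    _ = _ := by
        simp only [ENNReal.mul_rpow_of_nonneg _ _ hq0, Finset.prod_mul_distrib]
        rw [← mul_assoc]; rfl

open Classical in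
lemma sum_prod_hits_le {P : Type*} {n : ℕ} (hn : 2 ≤ n) (b : P → Fin n → ℝ) {L : ℕ}
    (hL : 0 < L) {r : ℝ} (hr : 1 ≤ r) (𝒯 : Fin n → Finset (Finset P))
    (h𝒯 : ∀ j, ∀ T ∈ 𝒯 j, ∀ p ∈ T, ∀ q ∈ T, ∀ i, i ≠ j →
      |b p i - b q i| ≤ |b p j - b q j| / L + 1) (U : Finset P) :
    ∑ c ∈ U.image (gridCell b r),
        ∏ j, ((hits b r (𝒯 j) c).card : ℝ≥0∞) ^ (1 / ((n : ℝ) - 1)) ≤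
      kakeyaConst n * ∑ c ∈ U.image (gridCell b (L * r)),
        ∏ j, ((hits b (L * r) (𝒯 j) c).card : ℝ≥0∞) ^ (1 / ((n : ℝ) - 1)) := by
  have hmaps : ∀ c ∈ U.image (gridCell b r),
      (fun i => c i / (L : ℤ)) ∈ U.image (gridCell b (L * r)) := by
    intro c hc
    obtain ⟨p, hp, rfl⟩ := Finset.mem_image.1 hc
    exact Finset.mem_image.2 ⟨p, hp, funext fun i => gridCell_mul b r L p i⟩
  rw [← Finset.sum_fiberwise_of_maps_to hmaps, Finset.mul_sum]
  refine Finset.sum_le_sum fun c' _ => ?_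
  refine sum_prod_hits_fiber_le hn b hL hr 𝒯 h𝒯 c' _ ?_
  intro c hc i
  exact congrFun (Finset.mem_filter.1 hc).2 i

open Classical in
/-- Multilinear Kakeya inequality, in a discrete form with loss `kakeyaConst n ^ M`. -/
theorem card_image_gridCell_le {P : Type*} {n : ℕ} (hn : 2 ≤ n) (b : P → Fin n → ℝ) {L : ℕ}
    (hL : 0 < L) (𝒯 : Fin n → Finset (Finset P))
    (h𝒯 : ∀ j, ∀ T ∈ 𝒯 j, ∀ p ∈ T, ∀ q ∈ T, ∀ i, i ≠ j →
      |b p i - b q i| ≤ |b p j - b q j| / L + 1) (U : Finset P)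
    (hU : ∀ p ∈ U, ∀ j, ∃ T ∈ 𝒯 j, p ∈ T) (M : ℕ)
    (hM : ∀ p ∈ U, ∀ i, |b p i| ≤ (L : ℝ) ^ M) :
    ((U.image (gridCell b 1)).card : ℝ≥0∞) ≤
      kakeyaConst n ^ M * 3 ^ n * ∏ j, ((𝒯 j).card : ℝ≥0∞) ^ (1 / ((n : ℝ) - 1)) := by
  have hn1 : (1 : ℝ) < n := by exact_mod_cast hn
  set q : ℝ := 1 / ((n : ℝ) - 1) with hq
  have hq0 : 0 ≤ q := by rw [hq]; apply one_div_nonneg.2; linarith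
  have hL1 : (1 : ℝ) ≤ L := by exact_mod_cast hL
  let F : ℕ → ℝ≥0∞ := fun m => ∑ c ∈ U.image (gridCell b ((L : ℝ) ^ m)),
    ∏ j, ((hits b ((L : ℝ) ^ m) (𝒯 j) c).card : ℝ≥0∞) ^ q
  have hstep : ∀ m, F m ≤ kakeyaConst n * F (m + 1) := by
    intro m
    have := sum_prod_hits_le hn b hL (one_le_pow₀ hL1 : 1 ≤ (L : ℝ) ^ m) 𝒯 h𝒯 U
    simp only [F, pow_succ']
    exact this
  have hiter : ∀ m, F 0 ≤ kakeyaConst n ^ m * F m := by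
    intro m
    induction m with
    | zero => simp
    | succ m ih =>
      refine ih.trans ?_
      rw [pow_succ, mul_assoc]
      gcongr
      exact hstep m
  have h0 : ((U.image (gridCell b 1)).card : ℝ≥0∞) ≤ F 0 := by
    simp only [F, pow_zero]
    calc ((U.image (gridCell b 1)).card : ℝ≥0∞) = ∑ c ∈ U.image (gridCell b 1), 1 := by simp
      _ ≤ _ := by
        refine Finset.sum_le_sum fun c hc => ?_
        refine Finset.one_le_prod' fun j _ => ?_
        refine ENNReal.one_le_rpow ?_ (by rw [hq]; apply one_div_pos.2; linarith)
        obtain ⟨p, hp, rfl⟩ := Finset.mem_image.1 hc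
        obtain ⟨T, hT, hpT⟩ := hU p hp j
        have : 0 < (hits b 1 (𝒯 j) (gridCell b 1 p)).card :=
          Finset.card_pos.2 ⟨T, Finset.mem_filter.2 ⟨hT, p, hpT, rfl⟩⟩
        exact_mod_cast this
  have hend : F M ≤ 3 ^ n * ∏ j, ((𝒯 j).card : ℝ≥0∞) ^ q := by
    have hLM : (0 : ℝ) < (L : ℝ) ^ M := by positivity
    calc F M ≤ ∑ c ∈ U.image (gridCell b ((L : ℝ) ^ M)), ∏ j, ((𝒯 j).card : ℝ≥0∞) ^ q := by
          refine Finset.sum_le_sum fun c _ => Finset.prod_le_prod' fun j _ => ?_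
          refine ENNReal.rpow_le_rpow ?_ hq0
          exact_mod_cast Finset.card_le_card (Finset.filter_subset _ _)
      _ = ((U.image (gridCell b ((L : ℝ) ^ M))).card : ℝ≥0∞) *
            ∏ j, ((𝒯 j).card : ℝ≥0∞) ^ q := by rw [Finset.sum_const, nsmul_eq_mul]
      _ ≤ _ := by
          gcongr
          have hsub : U.image (gridCell b ((L : ℝ) ^ M)) ⊆
              Fintype.piFinset fun _ : Fin n => Finset.Icc (-1 : ℤ) 1 := by
            intro c hc
            obtain ⟨p, hp, rfl⟩ := Finset.mem_image.1 hc
            rw [Fintype.mem_piFinset]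
            intro i
            have h1 := abs_le.1 (hM p hp i)
            rw [Finset.mem_Icc, gridCell, Int.le_floor, ← Int.lt_add_one_iff, Int.floor_lt]
            constructor
            · rw [le_div_iff₀ hLM]; push_cast; linarith
            · rw [div_lt_iff₀ hLM]; push_cast; linarith
          have := Finset.card_le_card hsub
          rw [Fintype.card_piFinset] at this
          simp only [Int.card_Icc, Finset.prod_const, Finset.card_univ, Fintype.card_fin] at this
          exact_mod_cast this
  calc _ ≤ F 0 := h0
    _ ≤ _ := hiter M
    _ ≤ _ := by rw [mul_assoc]; gcongr

lemma kakeyaConst_ne_top {n : ℕ} (hn : 2 ≤ n) : kakeyaConst n ≠ ⊤ := by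
  have hn1 : (1 : ℝ) < n := by exact_mod_cast hn
  have h1 : 0 ≤ (n : ℝ) - 1 := by linarith
  refine ENNReal.mul_ne_top (ENNReal.rpow_ne_top_of_nonneg (by positivity) (by simp)) ?_
  exact ENNReal.prod_ne_top fun _ _ =>
    ENNReal.rpow_ne_top_of_nonneg (one_div_nonneg.2 h1) (by simp)

/-- Greedy extraction: `H` splits into few members of the class `chain` with at least `t` elements
and a set which contains no such member. -/
lemma exists_rich_family {P : Type*} (chain : Finset P → Prop) {t : ℝ} (ht : 0 < t)
    (H : Finset P) :
    ∃ 𝒯 : Finset (Finset P), (∀ T ∈ 𝒯, chain T) ∧ (𝒯.card : ℝ) * t ≤ H.card ∧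
      ∀ T ⊆ H, chain T → (∀ p ∈ T, ∀ T' ∈ 𝒯, p ∉ T') → (T.card : ℝ) < t := by
  classical
  induction H using Finset.strongInduction with
  | H H ih =>
    by_cases hex : ∃ T ⊆ H, chain T ∧ t ≤ (T.card : ℝ)
    · obtain ⟨T, hTH, hT, hcard⟩ := hex
      have hTne : T.Nonempty := by
        rw [← Finset.card_pos]
        exact_mod_cast ht.trans_le hcard
      obtain ⟨𝒯, h1, h2, h3⟩ := ih (H \ T) (Finset.sdiff_ssubset hTH hTne)
      refine ⟨insert T 𝒯, ?_, ?_, ?_⟩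
      · intro T' hT'
        rcases Finset.mem_insert.1 hT' with rfl | h
        · exact hT
        · exact h1 _ h
      · have hc : ((insert T 𝒯).card : ℝ) ≤ 𝒯.card + 1 := by
          exact_mod_cast Finset.card_insert_le T 𝒯
        have hs : ((H \ T).card : ℝ) + T.card = H.card := by
          exact_mod_cast Finset.card_sdiff_add_card_eq_card hTH
        nlinarith
      · intro T' hT' hch hdis
        refine h3 T' ?_ hch fun p hp T'' hT'' => hdis p hp T'' (Finset.mem_insert_of_mem hT'')
        intro p hp
        exact Finset.mem_sdiff.2 ⟨hT' hp, hdis p hp T (Finset.mem_insert_self _ _)⟩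
    · push Not at hex
      exact ⟨∅, by simp, by simp, fun T hT hch _ => hex T hT hch⟩

lemma exists_unit_orthogonal {n m : ℕ} (hm : m < n) (v : Fin m → E n) :
    ∃ w : E n, ‖w‖ = 1 ∧ ∀ i, ⟪v i, w⟫ = 0 := by
  have hne : (Submodule.span ℝ (range v))ᗮ ≠ ⊥ := by
    intro h
    rw [Submodule.orthogonal_eq_bot_iff] at h
    have h1 := finrank_range_le_card (R := ℝ) v
    rw [Set.finrank, h, finrank_top, finrank_euclideanSpace_fin, Fintype.card_fin] at h1
    omega
  obtain ⟨w, hw, hw0⟩ := Submodule.exists_mem_ne_zero_of_ne_bot hne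
  refine ⟨(‖w‖⁻¹ : ℝ) • w, ?_, fun i => ?_⟩
  · rw [norm_smul, norm_inv, norm_norm, inv_mul_cancel₀ (norm_ne_zero_iff.2 hw0)]
  · rw [inner_smul_right, (Submodule.mem_orthogonal _ _).1 hw (v i)
      (Submodule.subset_span (mem_range_self i)), mul_zero]

lemma exists_quantitatively_independent {n : ℕ} {τ : ℝ} (hτ : 0 < τ) (J : Set (E n))
    (hJ : ∀ v ∈ J, ‖v‖ ≤ 1) (htr : ∀ w : E n, ‖w‖ = 1 → ∃ v ∈ J, τ < |⟪v, w⟫|) :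
    ∀ m ≤ n, ∃ v : Fin m → E n, (∀ i, v i ∈ J) ∧
      ∀ c : Fin m → ℝ, ∀ i, |c i| ≤ (1 + 1 / τ) ^ m * ‖∑ i, c i • v i‖ := by
  intro m
  induction m with
  | zero => exact fun _ => ⟨Fin.elim0, fun i => i.elim0, fun _ i => i.elim0⟩
  | succ m ih =>
    intro hm
    obtain ⟨v, hv, hc⟩ := ih (by omega)
    obtain ⟨w, hw, hvw⟩ := exists_unit_orthogonal (by omega : m < n) v
    obtain ⟨u, hu, huw⟩ := htr w hw
    have hτ' : 0 < 1 / τ := one_div_pos.2 hτ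
    refine ⟨Fin.snoc v u, fun i => ?_, fun c i => ?_⟩
    · refine Fin.lastCases ?_ (fun i => ?_) i
      · simpa using hu
      · simpa using hv i
    · set x := ∑ i, c i • (Fin.snoc v u : Fin (m + 1) → E n) i with hx
      rw [Fin.sum_univ_castSucc] at hx
      simp only [Fin.snoc_castSucc, Fin.snoc_last] at hx
      have hxw : ⟪x, w⟫ = c (Fin.last m) * ⟪u, w⟫ := by
        rw [hx, inner_add_left, sum_inner, inner_smul_left]
        simp [inner_smul_left, hvw]
      have hlast : |c (Fin.last m)| ≤ 1 / τ * ‖x‖ := by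
        have h1 : |c (Fin.last m)| * |⟪u, w⟫| ≤ ‖x‖ := by
          rw [← abs_mul, ← hxw]
          simpa [hw] using abs_real_inner_le_norm x w
        rw [one_div, ← div_eq_inv_mul, le_div_iff₀ hτ]
        nlinarith [abs_nonneg (c (Fin.last m))]
      have hrest : ‖∑ i : Fin m, c i.castSucc • v i‖ ≤ (1 + 1 / τ) * ‖x‖ := by
        have : ∑ i : Fin m, c i.castSucc • v i = x - c (Fin.last m) • u := by rw [hx]; abel
        rw [this]
        refine (norm_sub_le _ _).trans ?_
        rw [norm_smul, Real.norm_eq_abs]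
        have := hJ u hu
        nlinarith [abs_nonneg (c (Fin.last m))]
      have hpow : 1 ≤ (1 + 1 / τ) ^ m := one_le_pow₀ (by linarith)
      refine Fin.lastCases ?_ (fun i => ?_) i
      · refine hlast.trans ?_
        rw [pow_succ]
        have h0 := norm_nonneg x
        gcongr
        nlinarith
      · refine (hc (fun i => c i.castSucc) i).trans ?_
        rw [pow_succ, mul_assoc]
        gcongr

lemma exists_dual_of_transversal {n : ℕ} {τ : ℝ} (hτ : 0 < τ) (J : Set (E n))
    (hJ : ∀ v ∈ J, ‖v‖ ≤ 1) (htr : ∀ w : E n, ‖w‖ = 1 → ∃ v ∈ J, τ < |⟪v, w⟫|) :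
    ∃ v : Fin n → E n, (∀ i, v i ∈ J) ∧ ∃ a : Fin n → (E n →ₗ[ℝ] ℝ),
      (∀ i j, a i (v j) = if i = j then 1 else 0) ∧
      (∀ i x, |a i x| ≤ (1 + 1 / τ) ^ n * ‖x‖) ∧ ∀ x, x = ∑ i, a i x • v i := by
  obtain ⟨v, hv, hc⟩ := exists_quantitatively_independent hτ J hJ htr n le_rfl
  have hli : LinearIndependent ℝ v := by
    rw [Fintype.linearIndependent_iff]
    intro g hg i
    have := hc g i
    rw [hg, norm_zero, mul_zero] at this
    exact abs_eq_zero.1 (le_antisymm this (abs_nonneg _))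
  rcases Nat.eq_zero_or_pos n with rfl | hn
  · exact ⟨v, hv, fun i => i.elim0, fun i => i.elim0, fun i => i.elim0,
      fun x => Subsingleton.elim _ _⟩
  have : Nonempty (Fin n) := ⟨⟨0, hn⟩⟩
  let B := basisOfLinearIndependentOfCardEqFinrank hli (by simp)
  have hB : ∀ i, B i = v i := fun i => by simp [B]
  have hsum : ∀ x, x = ∑ i, B.coord i x • v i := fun x => by
    conv_lhs => rw [← B.sum_repr x]
    simp [hB]
  refine ⟨v, hv, fun i => B.coord i, fun i j => ?_, fun i x => ?_, hsum⟩
  · rw [← hB, Module.Basis.coord_apply, Module.Basis.repr_self, Finsupp.single_apply]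
    simp [eq_comm]
  · have := hc (fun i => B.coord i x) i
    rwa [← hsum x] at this

/-- An integer point as a vector. -/
def latticeVec {n : ℕ} (p : Fin n → ℤ) : E n := WithLp.toLp 2 fun i => (p i : ℝ)

lemma norm_le_sum_abs {n : ℕ} (x : E n) : ‖x‖ ≤ ∑ i, |x i| := by
  have hx : x = ∑ i, EuclideanSpace.single i (x i) := by
    ext j
    simp [Finset.sum_apply, Pi.single_apply]
  conv_lhs => rw [hx]
  refine (norm_sum_le _ _).trans ?_
  simp

lemma norm_le_of_forall_abs_le {n : ℕ} {x : E n} {R : ℝ} (h : ∀ i, |x i| ≤ R) : ‖x‖ ≤ n * R := by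
  refine (norm_le_sum_abs x).trans ((Finset.sum_le_sum fun i _ => h i).trans ?_)
  simp

/-- A discrete curve with direction `ε`-close to `v`, up to an additive error `C₀`. -/
def IsTube {n : ℕ} (ε C₀ : ℝ) (v : E n) (T : Finset (Fin n → ℤ)) : Prop :=
  ∀ p ∈ T, ∀ q ∈ T, ‖(latticeVec p - latticeVec q) - ⟪latticeVec p - latticeVec q, v⟫ • v‖ ≤
    ε * |⟪latticeVec p - latticeVec q, v⟫| + C₀

lemma IsTube.mono {n : ℕ} {ε C₀ : ℝ} {v : E n} {T T' : Finset (Fin n → ℤ)}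
    (h : IsTube ε C₀ v T) (hT : T' ⊆ T) : IsTube ε C₀ v T' :=
  fun p hp q hq => h p (hT hp) q (hT hq)

/-- Counting the points at which `n` transversal families of tubes meet. -/
theorem card_joints_le {n : ℕ} (hn : 2 ≤ n) {K ε C₀ : ℝ} (hK : 1 ≤ K) (hC₀ : n ≤ C₀)
    {L : ℕ} (hL : 0 < L) (hε : 2 * K * ε ≤ 1 / L) (hε0 : 0 ≤ ε)
    (v : Fin n → E n) (hv : ∀ i, ‖v i‖ ≤ 1) (a : Fin n → (E n →ₗ[ℝ] ℝ))
    (hav : ∀ i j, a i (v j) = if i = j then 1 else 0)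
    (haK : ∀ i x, |a i x| ≤ K * ‖x‖) (hsum : ∀ x, x = ∑ i, a i x • v i)
    (𝒯 : Fin n → Finset (Finset (Fin n → ℤ))) (h𝒯 : ∀ j, ∀ T ∈ 𝒯 j, IsTube ε C₀ (v j) T)
    (U : Finset (Fin n → ℤ)) (hU : ∀ p ∈ U, ∀ j, ∃ T ∈ 𝒯 j, p ∈ T) (M : ℕ)
    (hM : ∀ p ∈ U, ∀ i, |(p i : ℝ)| ≤ (L : ℝ) ^ M) :
    (U.card : ℝ) ≤ (2 * ⌈n * (2 * K * C₀)⌉₊ + 1) ^ n *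
      ((kakeyaConst n).toReal ^ M * 3 ^ n * ∏ j, ((𝒯 j).card : ℝ) ^ (1 / ((n : ℝ) - 1))) := by
  classical
  have hn1 : (1 : ℝ) < n := by exact_mod_cast hn
  have hLR : (1 : ℝ) ≤ L := by exact_mod_cast hL
  have hC0pos : 0 < C₀ := by linarith
  set ρ := 2 * K * C₀ with hρ
  have hρ0 : 0 < ρ := by positivity
  let b : (Fin n → ℤ) → Fin n → ℝ := fun p i => a i (latticeVec p) / ρ
  have hbsub : ∀ p q i, b p i - b q i = a i (latticeVec p - latticeVec q) / ρ := by
    intro p q i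
    simp only [b, map_sub]; ring
  have hKε : K * ε ≤ 1 / 2 := by
    have : 1 / (L : ℝ) ≤ 1 := by rw [div_le_one (by linarith)]; exact hLR
    linarith
  have hb : ∀ j, ∀ T ∈ 𝒯 j, ∀ p ∈ T, ∀ q ∈ T, ∀ i, i ≠ j →
      |b p i - b q i| ≤ |b p j - b q j| / L + 1 := by
    intro j T hT p hp q hq i hij
    have hTpq := h𝒯 j T hT p hp q hq
    rw [hbsub, hbsub, abs_div, abs_div, abs_of_pos hρ0]
    generalize latticeVec p - latticeVec q = x at hTpq ⊢
    set t := ⟪x, v j⟫ with ht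
    set y := x - t • v j with hy
    have hxy : x = t • v j + y := by rw [hy]; abel
    have hai : a i x = a i y := by
      rw [hxy, map_add, map_smul, hav, if_neg hij]; simp
    have haj : a j x = t + a j y := by
      conv_lhs => rw [hxy, map_add, map_smul, hav, if_pos rfl]
      simp
    have hyi : |a i y| ≤ K * (ε * |t| + C₀) := (haK i y).trans (by gcongr)
    have hyj : |a j y| ≤ K * (ε * |t| + C₀) := (haK j y).trans (by gcongr)
    have htj : |t| ≤ 2 * |a j x| + 2 * (K * C₀) := by
      have h1 : |t| ≤ |a j x| + |a j y| := by
        have : t = a j x - a j y := by rw [haj]; ring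
        rw [this]; exact abs_sub _ _
      nlinarith [abs_nonneg t]
    have hmain : |a i x| ≤ |a j x| / L + ρ := by
      rw [hai]
      have h2 : K * ε * |t| ≤ K * ε * (2 * |a j x| + 2 * (K * C₀)) := by gcongr
      have h3 : 2 * K * ε * |a j x| ≤ 1 / L * |a j x| := by gcongr
      have h4 : K * ε * (2 * (K * C₀)) ≤ 1 / 2 * (2 * (K * C₀)) := by gcongr
      have h5 : |a j x| / L = 1 / L * |a j x| := by ring
      nlinarith
    rw [div_le_iff₀ hρ0]
    calc |a i x| ≤ |a j x| / L + ρ := hmain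
      _ = _ := by field_simp
  have hbM : ∀ p ∈ U, ∀ i, |b p i| ≤ (L : ℝ) ^ M := by
    intro p hp i
    simp only [b]
    rw [abs_div, abs_of_pos hρ0, div_le_iff₀ hρ0]
    have h1 : ‖latticeVec p‖ ≤ n * (L : ℝ) ^ M := norm_le_of_forall_abs_le (hM p hp)
    have h0 : (0 : ℝ) < (L : ℝ) ^ M := by positivity
    calc |a i (latticeVec p)| ≤ K * (n * (L : ℝ) ^ M) := (haK _ _).trans (by gcongr)
      _ ≤ K * (C₀ * (L : ℝ) ^ M) := by gcongr
      _ ≤ (L : ℝ) ^ M * ρ := by rw [hρ]; nlinarith [mul_pos (mul_pos h0 hC0pos) (by linarith : 0 < K)]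
  have hk := card_image_gridCell_le hn b hL 𝒯 hb U hU M hbM
  have hq0 : 0 ≤ 1 / ((n : ℝ) - 1) := by apply one_div_nonneg.2; linarith
  have hk' : ((U.image (gridCell b 1)).card : ℝ) ≤
      (kakeyaConst n).toReal ^ M * 3 ^ n * ∏ j, ((𝒯 j).card : ℝ) ^ (1 / ((n : ℝ) - 1)) := by
    have hfin : kakeyaConst n ^ M * 3 ^ n *
        ∏ j, ((𝒯 j).card : ℝ≥0∞) ^ (1 / ((n : ℝ) - 1)) ≠ ⊤ := by
      refine ENNReal.mul_ne_top (ENNReal.mul_ne_top (ENNReal.pow_ne_top (kakeyaConst_ne_top hn))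
        (ENNReal.pow_ne_top (by simp))) (ENNReal.prod_ne_top fun j _ =>
          ENNReal.rpow_ne_top_of_nonneg hq0 (by simp))
    have := ENNReal.toReal_mono hfin hk
    simpa [ENNReal.toReal_mul, ENNReal.toReal_pow, ENNReal.toReal_prod,
      ← ENNReal.toReal_rpow] using this
  set N := ⌈n * ρ⌉₊ with hN
  have hfib : U.card ≤ (2 * N + 1) ^ n * (U.image (gridCell b 1)).card := by
    refine Finset.card_le_mul_card_image U _ fun c hc => ?_
    obtain ⟨p, hp, rfl⟩ := Finset.mem_image.1 hc
    have hsub : (U.filter fun q => gridCell b 1 q = gridCell b 1 p) ⊆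
        Fintype.piFinset fun i => Finset.Icc (p i - N) (p i + N) := by
      intro q hq
      have hqp := (Finset.mem_filter.1 hq).2
      rw [Fintype.mem_piFinset]
      have hx : ‖latticeVec q - latticeVec p‖ ≤ n * ρ := by
        rw [hsum (latticeVec q - latticeVec p)]
        refine (norm_sum_le _ _).trans ?_
        calc _ ≤ ∑ i : Fin n, ρ := by
              refine Finset.sum_le_sum fun i _ => ?_
              rw [norm_smul, Real.norm_eq_abs]
              have h1 := abs_sub_lt_of_gridCell_eq one_pos (congrFun hqp i)
              rw [hbsub, abs_div, abs_of_pos hρ0, div_lt_one hρ0] at h1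
              nlinarith [hv i, norm_nonneg (v i), abs_nonneg (a i (latticeVec q - latticeVec p))]
          _ = n * ρ := by simp
      intro i
      have h2 : |(q i : ℝ) - p i| ≤ N := by
        have := (PiLp.norm_apply_le (latticeVec q - latticeVec p) i).trans
          (hx.trans (Nat.le_ceil _))
        simpa [latticeVec] using this
      have h3 : |q i - p i| ≤ (N : ℤ) := by exact_mod_cast h2
      rw [abs_le] at h3
      rw [Finset.mem_Icc]
      constructor <;> linarith
    refine (Finset.card_le_card hsub).trans ?_
    rw [Fintype.card_piFinset]
    refine (Finset.prod_le_pow_card _ _ (2 * N + 1) fun i _ => ?_).trans (by simp)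
    rw [Int.card_Icc]
    omega
  calc (U.card : ℝ) ≤ (2 * N + 1) ^ n * (U.image (gridCell b 1)).card := by exact_mod_cast hfib
    _ ≤ _ := by gcongr

/-- The vectors of `J` are all almost orthogonal to a common unit vector. -/
def NearHyperplane {n : ℕ} (τ : ℝ) (J : Set (E n)) : Prop :=
  ∃ w : E n, ‖w‖ = 1 ∧ ∀ v ∈ J, |⟪v, w⟫| ≤ τ

/-- Sets of `O(2^{ks})` integer points of size `O(2^k)` can be divided so that each part meets
few points of the tubes in the directions `v ∈ V`, apart from directions near a hyperplane. -/
def SparseSplitting {n : ℕ} (V : Finset (E n)) (τ ε C₀ s : ℝ) : Prop :=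
  ∀ K B : ℝ, 0 ≤ K → ∃ C κ : ℝ, 0 ≤ C ∧ 0 < κ ∧ ∀ (k : ℕ) (H : Finset (Fin n → ℤ)),
    (∀ p ∈ H, ∀ i, |(p i : ℝ)| ≤ B * 2 ^ k) → (H.card : ℝ) ≤ K * 2 ^ (k * s) →
    ∃ j : (Fin n → ℤ) → Finset (E n), (∀ p, j p ⊆ V ∧ NearHyperplane τ (j p : Set (E n))) ∧
      ∀ v ∈ V, ∀ T ⊆ H, (∀ p ∈ T, v ∉ j p) → IsTube ε C₀ v T →
        (T.card : ℝ) ≤ C * 2 ^ (k * (1 - κ))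

lemma nearHyperplane_empty {n : ℕ} (hn : 1 ≤ n) (τ : ℝ) :
    NearHyperplane τ ((∅ : Finset (E n)) : Set (E n)) :=
  ⟨EuclideanSpace.single ⟨0, hn⟩ 1, by simp, by simp⟩

lemma sparseSplitting_of_lt_one {n : ℕ} (hn : 1 ≤ n) (V : Finset (E n)) (τ ε C₀ : ℝ) {s : ℝ}
    (hs : s < 1) : SparseSplitting V τ ε C₀ s := by
  intro K B hK
  refine ⟨K, 1 - s, hK, by linarith, fun k H _ hcard => ⟨fun _ => ∅, fun p => ⟨by simp,
    nearHyperplane_empty hn τ⟩, fun v _ T hT _ _ => ?_⟩⟩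
  have : (T.card : ℝ) ≤ H.card := by exact_mod_cast Finset.card_le_card hT
  refine (this.trans hcard).trans ?_
  simp

lemma two_rpow_natCast_mul_le {k : ℕ} {x y : ℝ} (h : x ≤ y) :
    (2 : ℝ) ^ (k * x) ≤ 2 ^ (k * y) :=
  Real.rpow_le_rpow_of_exponent_le one_le_two (by gcongr)

/-- The main gain: the points where `n` transversal rich families meet are fewer. -/
lemma sparseSplitting_step {n : ℕ} (hn : 2 ≤ n) (V : Finset (E n)) (hV : ∀ v ∈ V, ‖v‖ ≤ 1)
    {τ ε C₀ s s₀ c e : ℝ} (hτ : 0 < τ) (hC₀ : n ≤ C₀) (hε0 : 0 ≤ ε) {a : ℕ} (ha : 1 ≤ a)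
    (hε : 2 * (1 + 1 / τ) ^ n * ε ≤ 1 / (2 ^ a : ℕ))
    (hs₀ : s₀ < n) (hc : c = (n - s₀) / (8 * n)) (he : e = (n - s₀) / (8 * n))
    (hA : (kakeyaConst n).toReal ≤ 2 ^ (a * e)) (hs : s ≤ s₀)
    (ih : SparseSplitting V τ ε C₀ (s - c)) : SparseSplitting V τ ε C₀ s := by
  classical
  intro K B hK
  have hn1 : (1 : ℝ) < n := by exact_mod_cast hn
  set q : ℝ := 1 / ((n : ℝ) - 1) with hq
  have hq0 : 0 ≤ q := by rw [hq]; apply one_div_nonneg.2; linarith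
  set Q : ℝ := (1 + 1 / τ) ^ n with hQ
  have hQ1 : 1 ≤ Q := one_le_pow₀ (by have := one_div_pos.2 hτ; linarith)
  set κ : ℝ := (n - s₀) / (2 * n) with hκ
  have hη : 0 < n - s₀ := by linarith
  have hκ0 : 0 < κ := by positivity
  have he0 : 0 < e := by rw [he]; positivity
  have hexp : e + (s - 1 + κ) * (n * q) ≤ s - c := by
    have hq1 : q * (n - 1) = 1 := by rw [hq]; exact one_div_mul_cancel (sub_pos.2 hn1).ne'
    have hnq : n * q = 1 + q := by linarith
    have hκn : κ * n = (n - s₀) / 2 := by rw [hκ]; field_simp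
    have hcn : c * n = (n - s₀) / 8 := by rw [hc]; field_simp
    have hec : e = c := by rw [he, hc]
    have h1 : (s - 1 + κ) * (n * q) = s - q * (n - s - κ * n) := by
      linear_combination s * hnq
    rw [h1, hec, hκn]
    have h2 : q * (n - s - (n - s₀) / 2) ≥ q * ((n - s₀) / 2) := by
      gcongr; linarith
    have h3 : q * ((n - s₀) / 2) ≥ 2 * c := by
      have h4 : (n - s₀) / 2 = 4 * (c * n) := by rw [hcn]; ring
      have h5 : q * (4 * (c * n)) = 4 * c * (n * q) := by ring
      have hcp : 0 < c := by rw [hc]; positivity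
      rw [h4, h5, hnq]
      nlinarith
    linarith
  obtain ⟨B₀, hB₀⟩ : ∃ B₀ : ℕ, B ≤ 2 ^ B₀ := by
    obtain ⟨m, hm⟩ := pow_unbounded_of_one_lt B (one_lt_two)
    exact ⟨m, hm.le⟩
  set D : ℝ := (2 * ⌈n * (2 * Q * C₀)⌉₊ + 1) ^ n with hD
  have hD0 : 0 ≤ D := by positivity
  set K' : ℝ := (V.card : ℝ) ^ n * (D * (2 ^ (e * (a * (1 + B₀))) * 3 ^ n * K ^ (n * q))) with hK'
  have hK'0 : 0 ≤ K' := by positivity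
  obtain ⟨C', κ', hC'0, hκ'0, hC'⟩ := ih K' B hK'0
  refine ⟨1 + C', min κ κ', by linarith, lt_min hκ0 hκ'0, fun k H hH hcard => ?_⟩
  set t : ℝ := 2 ^ (k * (1 - κ)) with ht
  have ht0 : 0 < t := by positivity
  choose 𝒯 h𝒯 h𝒯card h𝒯poor using fun v : E n =>
    exists_rich_family (IsTube ε C₀ v) ht0 H
  let J : (Fin n → ℤ) → Finset (E n) := fun p => V.filter fun v => ∃ T ∈ 𝒯 v, p ∈ T
  set S := H.filter fun p => ¬ NearHyperplane τ (J p : Set (E n)) with hS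
  have hScard : (S.card : ℝ) ≤ K' * 2 ^ (k * (s - c)) := by
    let good : (Fin n → E n) → Prop := fun v => ∃ a : Fin n → (E n →ₗ[ℝ] ℝ),
      (∀ i j, a i (v j) = if i = j then 1 else 0) ∧
      (∀ i x, |a i x| ≤ Q * ‖x‖) ∧ ∀ x, x = ∑ i, a i x • v i
    let U : (Fin n → E n) → Finset (Fin n → ℤ) := fun v =>
      S.filter fun p => good v ∧ ∀ i, v i ∈ J p
    have hcover : S ⊆ (Fintype.piFinset fun _ : Fin n => V).biUnion U := by
      intro p hp
      have hpn := (Finset.mem_filter.1 hp).2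
      unfold NearHyperplane at hpn
      push Not at hpn
      obtain ⟨v, hvJ, hv⟩ := exists_dual_of_transversal hτ (J p : Set (E n))
        (fun v hv => hV v (Finset.mem_filter.1 hv).1) hpn
      refine Finset.mem_biUnion.2 ⟨v, ?_, Finset.mem_filter.2 ⟨hp, hv, fun i => hvJ i⟩⟩
      exact Fintype.mem_piFinset.2 fun i => (Finset.mem_filter.1 (hvJ i)).1
    set M : ℕ := k / a + 1 + B₀ with hM
    have haM1 : k + B₀ ≤ a * M := by
      have h1 := Nat.div_add_mod k a
      have h2 := Nat.mod_lt k (by omega : 0 < a)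
      have h3 : B₀ ≤ a * B₀ := Nat.le_mul_of_pos_left _ (by omega)
      have h4 : a * M = a * (k / a) + a + a * B₀ := by rw [hM]; ring
      omega
    have haM2 : a * M ≤ k + a * (1 + B₀) := by
      have h1 := Nat.mul_div_le k a
      have h4 : a * M = a * (k / a) + a * (1 + B₀) := by rw [hM]; ring
      omega
    have hAM : (kakeyaConst n).toReal ^ M ≤ 2 ^ (e * (a * (1 + B₀))) * 2 ^ (k * e) := by
      calc (kakeyaConst n).toReal ^ M ≤ ((2 : ℝ) ^ (a * e)) ^ M := by
            gcongr
        _ = 2 ^ (e * ((a * M : ℕ) : ℝ)) := by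
            rw [← Real.rpow_natCast, ← Real.rpow_mul two_pos.le]
            congr 1; push_cast; ring
        _ ≤ 2 ^ (e * ((k + a * (1 + B₀) : ℕ) : ℝ)) :=
            Real.rpow_le_rpow_of_exponent_le one_le_two (by gcongr)
        _ = _ := by
            rw [← Real.rpow_add two_pos]
            congr 1; push_cast; ring
    have hUcard : ∀ v ∈ Fintype.piFinset fun _ : Fin n => V, ((U v).card : ℝ) ≤
        D * (2 ^ (e * (a * (1 + B₀))) * 3 ^ n * K ^ (n * q)) * 2 ^ (k * (s - c)) := by
      intro v hv
      have hvV := Fintype.mem_piFinset.1 hv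
      by_cases hg : good v
      swap
      · have : U v = ∅ := Finset.filter_eq_empty_iff.2 fun p _ h => hg h.1
        rw [this, Finset.card_empty, Nat.cast_zero]
        exact mul_nonneg (mul_nonneg hD0 (mul_nonneg (mul_nonneg (by positivity) (by positivity))
          (Real.rpow_nonneg hK _))) (by positivity)
      obtain ⟨al, h1, h2, h3⟩ := hg
      have hj := card_joints_le hn hQ1 hC₀ (L := 2 ^ a) (by positivity) hε hε0 v
        (fun i => hV _ (hvV i)) al h1 h2 h3 (fun i => 𝒯 (v i)) (fun i => h𝒯 (v i)) (U v)
        (fun p hp i => (Finset.mem_filter.1 ((Finset.mem_filter.1 hp).2.2 i)).2) M ?_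
      · refine hj.trans ?_
        rw [mul_assoc D]
        refine mul_le_mul_of_nonneg_left ?_ hD0
        have hone : ∀ i, ((𝒯 (v i)).card : ℝ) ≤ K * 2 ^ (k * (s - 1 + κ)) := by
          intro i
          have := (h𝒯card (v i)).trans hcard
          rw [← le_div_iff₀ ht0] at this
          refine this.trans_eq ?_
          rw [ht, mul_div_assoc, ← Real.rpow_sub two_pos]
          congr 2; ring
        calc (kakeyaConst n).toReal ^ M * 3 ^ n * ∏ i, ((𝒯 (v i)).card : ℝ) ^ q
            ≤ (2 ^ (e * (a * (1 + B₀))) * 2 ^ (k * e)) * 3 ^ n *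
              ∏ _i : Fin n, (K * 2 ^ (k * (s - 1 + κ))) ^ q := by
              have hK2 : 0 ≤ K * (2 : ℝ) ^ (k * (s - 1 + κ)) :=
                mul_nonneg hK (Real.rpow_nonneg two_pos.le _)
              refine mul_le_mul (mul_le_mul_of_nonneg_right hAM (by positivity))
                (Finset.prod_le_prod (fun i _ => Real.rpow_nonneg (Nat.cast_nonneg _) _)
                  fun i _ => Real.rpow_le_rpow (Nat.cast_nonneg _) (hone i) hq0)
                (Finset.prod_nonneg fun i _ => Real.rpow_nonneg (Nat.cast_nonneg _) _)
                (by positivity)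
          _ = (2 ^ (e * (a * (1 + B₀))) * 2 ^ (k * e)) * 3 ^ n *
              (K ^ (n * q) * 2 ^ (k * ((s - 1 + κ) * (n * q)))) := by
              congr 1
              rw [Finset.prod_const, Finset.card_univ, Fintype.card_fin, ← Real.rpow_natCast,
                ← Real.rpow_mul (by positivity), Real.mul_rpow hK (by positivity),
                ← Real.rpow_mul two_pos.le]
              congr 2 <;> ring
          _ = 2 ^ (e * (a * (1 + B₀))) * 3 ^ n * K ^ (n * q) *
              2 ^ (k * (e + (s - 1 + κ) * (n * q))) := by
              rw [mul_add (k : ℝ), Real.rpow_add two_pos]; ring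
          _ ≤ _ := by
              gcongr
              exact one_le_two
      · intro p hp i
        have hpH : p ∈ H := (Finset.mem_filter.1 (Finset.mem_filter.1 hp).1).1
        refine (hH p hpH i).trans ?_
        calc B * 2 ^ k ≤ 2 ^ B₀ * 2 ^ k := by gcongr
          _ = 2 ^ (k + B₀) := by rw [pow_add, mul_comm]
          _ ≤ 2 ^ (a * M) := pow_le_pow_right₀ one_le_two haM1
          _ = _ := by push_cast; rw [pow_mul]
    calc (S.card : ℝ) ≤ (((Fintype.piFinset fun _ : Fin n => V).biUnion U).card : ℝ) := by
          exact_mod_cast Finset.card_le_card hcover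
      _ ≤ ∑ v ∈ Fintype.piFinset fun _ : Fin n => V, ((U v).card : ℝ) := by
          exact_mod_cast Finset.card_biUnion_le
      _ ≤ ∑ v ∈ Fintype.piFinset fun _ : Fin n => V, _ := Finset.sum_le_sum hUcard
      _ = _ := by
          rw [Finset.sum_const, Fintype.card_piFinset_const, nsmul_eq_mul, hK']
          push_cast; ring
  obtain ⟨j', hj'1, hj'2⟩ := hC' k S (fun p hp => hH p (Finset.mem_filter.1 hp).1) hScard
  refine ⟨fun p => if NearHyperplane τ (J p : Set (E n)) then J p else j' p, fun p => ?_, ?_⟩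
  · by_cases hp : NearHyperplane τ (J p : Set (E n))
    · simp only [if_pos hp]
      exact ⟨Finset.filter_subset _ _, hp⟩
    · simp only [if_neg hp]
      exact hj'1 p
  · intro v hv T hT hvT hTube
    have hsplit := Finset.card_filter_add_card_filter_not (s := T)
      (fun p => NearHyperplane τ (J p : Set (E n)))
    have h1 : ((T.filter fun p => NearHyperplane τ (J p : Set (E n))).card : ℝ) ≤
        2 ^ (k * (1 - min κ κ')) := by
      refine (h𝒯poor v _ ((Finset.filter_subset _ _).trans hT)
        (hTube.mono (Finset.filter_subset _ _)) ?_).le.trans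
        (two_rpow_natCast_mul_le (by linarith [min_le_left κ κ']))
      intro p hp T' hT' hpT'
      obtain ⟨hpT, hpJ⟩ := Finset.mem_filter.1 hp
      have := hvT p hpT
      simp only [if_pos hpJ] at this
      exact this (Finset.mem_filter.2 ⟨hv, T', hT', hpT'⟩)
    have h2 : ((T.filter fun p => ¬ NearHyperplane τ (J p : Set (E n))).card : ℝ) ≤
        C' * 2 ^ (k * (1 - min κ κ')) := by
      refine (hj'2 v hv _ ?_ ?_ (hTube.mono (Finset.filter_subset _ _))).trans ?_
      · intro p hp
        obtain ⟨hpT, hpJ⟩ := Finset.mem_filter.1 hp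
        exact Finset.mem_filter.2 ⟨hT hpT, hpJ⟩
      · intro p hp
        obtain ⟨hpT, hpJ⟩ := Finset.mem_filter.1 hp
        have := hvT p hpT
        simpa only [if_neg hpJ] using this
      · gcongr ?_ * ?_
        exact two_rpow_natCast_mul_le (by linarith [min_le_right κ κ'])
    have hsplit' : (T.card : ℝ) =
        ((T.filter fun p => NearHyperplane τ (J p : Set (E n))).card : ℝ) +
        ((T.filter fun p => ¬ NearHyperplane τ (J p : Set (E n))).card : ℝ) := by
      exact_mod_cast hsplit.symm
    rw [hsplit']
    linarith

theorem exists_sparseSplitting {n : ℕ} (hn : 1 ≤ n) {τ s C₀ : ℝ} (hτ : 0 < τ) (hs : s < n)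
    (hC₀ : n ≤ C₀) {ε₀ : ℝ} (hε₀ : 0 < ε₀) :
    ∃ ε, 0 < ε ∧ ε ≤ ε₀ ∧ ∀ V : Finset (E n), (∀ v ∈ V, ‖v‖ ≤ 1) →
      SparseSplitting V τ ε C₀ s := by
  rcases hn.eq_or_lt with rfl | hn2
  · exact ⟨ε₀, hε₀, le_rfl, fun V _ => sparseSplitting_of_lt_one le_rfl V _ _ _ (by simpa using hs)⟩
  set c : ℝ := (n - s) / (8 * n) with hc
  have hn0 : (0 : ℝ) < n := by exact_mod_cast hn
  have hc0 : 0 < c := by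
    rw [hc]
    have : 0 < n - s := by linarith
    positivity
  obtain ⟨a, ha⟩ : ∃ a : ℕ, 1 ≤ a ∧ (kakeyaConst n).toReal ≤ 2 ^ (a * c) := by
    have h1 : (1 : ℝ) < 2 ^ c := Real.one_lt_rpow one_lt_two hc0
    obtain ⟨m, hm⟩ := pow_unbounded_of_one_lt (kakeyaConst n).toReal h1
    refine ⟨m + 1, by omega, hm.le.trans ?_⟩
    rw [← Real.rpow_natCast, ← Real.rpow_mul two_pos.le, mul_comm]
    exact Real.rpow_le_rpow_of_exponent_le one_le_two (by push_cast; gcongr; linarith)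
  have hQ : 0 < (1 + 1 / τ) ^ n := by positivity
  set ε : ℝ := min ε₀ (1 / (2 ^ a : ℕ) / (2 * (1 + 1 / τ) ^ n)) with hε
  have hε0 : 0 < ε := lt_min hε₀ (by positivity)
  refine ⟨ε, hε0, min_le_left _ _, fun V hV => ?_⟩
  have hind : ∀ i : ℕ, ∀ s' ≤ s, s' < 1 + i * c → SparseSplitting V τ ε C₀ s' := by
    intro i
    induction i with
    | zero =>
      intro s' _ h
      exact sparseSplitting_of_lt_one hn V _ _ _ (by simpa using h)
    | succ i ih =>
      intro s' hs' h
      refine sparseSplitting_step hn2 V hV hτ hC₀ hε0.le ha.1 ?_ hs hc hc ha.2 hs'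
        (ih _ (by linarith) (by push_cast at h; linarith))
      have := min_le_right ε₀ (1 / (2 ^ a : ℕ) / (2 * (1 + 1 / τ) ^ n))
      rw [← hε, le_div_iff₀ (by positivity)] at this
      linarith
  obtain ⟨i, hi⟩ := exists_nat_gt ((s - 1) / c)
  rw [div_lt_iff₀ hc0] at hi
  exact hind i s le_rfl (by linarith)

lemma exists_dyadic_scale {D : ℝ≥0∞} {j : ℕ} (hD : D ≤ 2⁻¹ ^ j) {s : ℝ} (hs : 0 < s) {η : ℝ≥0∞}
    (hη : η ≠ 0) :
    ∃ k ≥ j, D ≤ 2⁻¹ ^ k ∧ ((2⁻¹ : ℝ≥0∞) ^ k) ^ s ≤ 2 ^ s * D ^ s + η := by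
  rcases eq_or_ne D 0 with rfl | hD0
  · have hlim : Tendsto (fun k : ℕ => ((2⁻¹ : ℝ≥0∞) ^ k) ^ s) atTop (𝓝 (0 ^ s)) :=
      (ENNReal.continuous_rpow_const.tendsto _).comp
        (ENNReal.tendsto_pow_atTop_nhds_zero_of_lt_one (by simp))
    rw [ENNReal.zero_rpow_of_pos hs] at hlim
    obtain ⟨k, hk, hkj⟩ := ((hlim.eventually_lt_const (pos_iff_ne_zero.2 hη)).and
      (eventually_ge_atTop j)).exists
    exact ⟨k, hkj, zero_le, hk.le.trans le_add_self⟩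
  · have hDtop : D ≠ ⊤ := ne_top_of_le_ne_top (by simp) hD
    have hcast : ∀ k : ℕ, (2⁻¹ : ℝ≥0∞) ^ k = ENNReal.ofReal ((1 / 2) ^ k) := fun k => by
      rw [ENNReal.ofReal_pow (by norm_num), one_div, ENNReal.ofReal_inv_of_pos two_pos]
      simp
    have hd0 : 0 < D.toReal := ENNReal.toReal_pos hD0 hDtop
    have hdj : D.toReal ≤ (1 / 2) ^ j :=
      ENNReal.toReal_le_of_le_ofReal (by positivity) (hcast j ▸ hD)
    obtain ⟨k, hk1, hk2⟩ := exists_nat_pow_near_of_lt_one hd0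
      (hdj.trans (pow_le_one₀ (by norm_num) (by norm_num))) (by norm_num : (0 : ℝ) < 1 / 2)
      (by norm_num)
    refine ⟨k, ?_, ?_, ?_⟩
    · have := (pow_lt_pow_iff_right_of_lt_one₀ (by norm_num : (0 : ℝ) < 1 / 2)
        (by norm_num)).1 (hk1.trans_le hdj)
      omega
    · rw [hcast, ← ENNReal.ofReal_toReal hDtop]
      exact ENNReal.ofReal_le_ofReal hk2
    · rw [← ENNReal.mul_rpow_of_nonneg _ _ hs.le]
      refine (ENNReal.rpow_le_rpow ?_ hs.le).trans le_self_add
      rw [← ENNReal.ofReal_toReal hDtop, hcast, ← ENNReal.ofReal_ofNat 2,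
        ← ENNReal.ofReal_mul two_pos.le]
      refine ENNReal.ofReal_le_ofReal ?_
      rw [pow_succ] at hk1
      linarith

/-- The index of the dyadic cube of side `2^{-k}` containing `x`. -/
def cellAt {n : ℕ} (k : ℕ) (x : E n) : Fin n → ℤ := fun i => ⌊2 ^ k * x i⌋

lemma abs_cellAt_le {n : ℕ} {k B : ℕ} {x : E n} (hx : ∀ i, |x i| ≤ B) (i : Fin n) :
    |(cellAt k x i : ℝ)| ≤ (B + 1) * 2 ^ k := by
  have h1 := Int.floor_le ((2 : ℝ) ^ k * x i)
  have h2 := Int.lt_floor_add_one ((2 : ℝ) ^ k * x i)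
  have h3 : (1 : ℝ) ≤ 2 ^ k := one_le_pow₀ one_le_two
  have h4 := abs_le.1 (hx i)
  have h5 : (2 : ℝ) ^ k * x i ≤ 2 ^ k * B := by gcongr; exact h4.2
  have h6 : (2 : ℝ) ^ k * (-B) ≤ 2 ^ k * x i := by gcongr; exact h4.1
  unfold cellAt
  rw [abs_le]
  constructor <;> linarith

lemma exists_card_le_cellAt_mem {n : ℕ} (k : ℕ) {t : Set (E n)} (ht : ediam t ≤ 2⁻¹ ^ k) :
    ∃ H : Finset (Fin n → ℤ), H.card ≤ 3 ^ n ∧ ∀ x ∈ t, cellAt k x ∈ H := by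
  classical
  rcases t.eq_empty_or_nonempty with rfl | ⟨y, hy⟩
  · exact ⟨∅, by simp, by simp⟩
  refine ⟨Fintype.piFinset fun i => Finset.Icc (cellAt k y i - 1) (cellAt k y i + 1), ?_, ?_⟩
  · rw [Fintype.card_piFinset]
    simp only [Int.card_Icc]
    rw [Finset.prod_congr rfl (g := fun _ => 3) (fun i _ => by omega)]
    simp
  · intro x hx
    rw [Fintype.mem_piFinset]
    intro i
    have h1 : edist x y ≤ ENNReal.ofReal ((1 / 2) ^ k) := by
      refine (edist_le_ediam_of_mem hx hy).trans (ht.trans_eq ?_)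
      rw [ENNReal.ofReal_pow (by norm_num), one_div, ENNReal.ofReal_inv_of_pos two_pos]
      simp
    rw [edist_dist, ENNReal.ofReal_le_ofReal_iff (by positivity), dist_eq_norm] at h1
    have h2 : |x i - y i| ≤ (1 / 2) ^ k := (PiLp.norm_apply_le (x - y) i).trans h1
    have h3 : |2 ^ k * x i - 2 ^ k * y i| ≤ 1 := by
      rw [← mul_sub, abs_mul, abs_of_pos (by positivity)]
      calc (2 : ℝ) ^ k * |x i - y i| ≤ 2 ^ k * (1 / 2) ^ k := by gcongr
        _ = 1 := by rw [← mul_pow]; norm_num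
    rw [abs_le] at h3
    have h4 := Int.floor_le ((2 : ℝ) ^ k * x i)
    have h5 := Int.lt_floor_add_one ((2 : ℝ) ^ k * x i)
    have h6 := Int.floor_le ((2 : ℝ) ^ k * y i)
    have h7 := Int.lt_floor_add_one ((2 : ℝ) ^ k * y i)
    rw [Finset.mem_Icc]
    unfold cellAt
    constructor
    · have : ((⌊(2 : ℝ) ^ k * y i⌋ : ℝ)) < ⌊(2 : ℝ) ^ k * x i⌋ + 2 := by linarith
      have : ⌊(2 : ℝ) ^ k * y i⌋ < ⌊(2 : ℝ) ^ k * x i⌋ + 2 := by exact_mod_cast this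
      omega
    · have : ((⌊(2 : ℝ) ^ k * x i⌋ : ℝ)) < ⌊(2 : ℝ) ^ k * y i⌋ + 2 := by linarith
      have : ⌊(2 : ℝ) ^ k * x i⌋ < ⌊(2 : ℝ) ^ k * y i⌋ + 2 := by exact_mod_cast this
      omega

/-- A set of zero `s`-dimensional measure is seen infinitely often by families of
`O(2^{ks})` dyadic cubes of side `2^{-k}`. -/
lemma exists_cells_of_hausdorffMeasure_eq_zero {n : ℕ} {R : Set (E n)} {s : ℝ} (hs : 0 < s)
    (hR : μH[s] R = 0) :
    ∃ K : ℝ, 0 ≤ K ∧ ∃ H : ℕ → Finset (Fin n → ℤ), (∀ k, ((H k).card : ℝ) ≤ K * 2 ^ (k * s)) ∧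
      ∀ x ∈ R, ∃ᶠ k in atTop, cellAt k x ∈ H k := by
  classical
  have hcov : ∀ j : ℕ, ∃ t : ℕ → Set (E n), R ⊆ ⋃ m, t m ∧ (∀ m, ediam (t m) ≤ 2⁻¹ ^ j) ∧
      ∑' m, ediam (t m) ^ s ≤ 2⁻¹ ^ j := by
    intro j
    rw [Measure.hausdorffMeasure_apply] at hR
    have hj : (0 : ℝ≥0∞) < 2⁻¹ ^ j := by simp [pos_iff_ne_zero]
    have h1 := le_antisymm ((le_iSup₂ (f := fun r (_ : 0 < r) => ⨅ t : ℕ → Set (E n),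
      ⨅ (_ : R ⊆ ⋃ n, t n), ⨅ (_ : ∀ (n : ℕ), ediam (t n) ≤ r),
        ∑' (n : ℕ), ⨆ (_ : (t n).Nonempty), ediam (t n) ^ s) (2⁻¹ ^ j) hj).trans_eq hR) zero_le
    have h2 := h1.trans_lt hj
    simp only [iInf_lt_iff] at h2
    obtain ⟨t, ht1, ht2, ht3⟩ := h2
    refine ⟨t, ht1, ht2, le_trans (ENNReal.tsum_le_tsum fun m => ?_) ht3.le⟩
    rcases (t m).eq_empty_or_nonempty with h | h
    · simp [h, hs]
    · simp [h]
  choose t ht1 ht2 ht3 using hcov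
  obtain ⟨η, hη0, hη⟩ := ENNReal.exists_pos_sum_of_countable one_ne_zero (ℕ × ℕ)
  choose κ hκ1 hκ2 hκ3 using fun p : ℕ × ℕ =>
    exists_dyadic_scale (ht2 p.1 p.2) hs (ENNReal.coe_ne_zero.2 (hη0 p).ne')
  choose F hF1 hF2 using fun p : ℕ × ℕ => exists_card_le_cellAt_mem (κ p) (hκ2 p)
  set c : ℝ≥0∞ := 2 ^ s * 2 + 1 with hc
  have hctop : c ≠ ⊤ := by
    rw [hc]
    finiteness
  have hsum : ∑' p, ((2⁻¹ : ℝ≥0∞) ^ κ p) ^ s ≤ c := by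
    refine (ENNReal.tsum_le_tsum hκ3).trans ?_
    rw [ENNReal.tsum_add, ENNReal.tsum_mul_left, ENNReal.tsum_prod']
    rw [hc]
    refine add_le_add (mul_le_mul_right ?_ _) hη.le
    refine (ENNReal.tsum_le_tsum ht3).trans_eq ?_
    rw [ENNReal.tsum_geometric, ENNReal.one_sub_inv_two, inv_inv]
  have hpow0 : ∀ k : ℕ, ((2⁻¹ : ℝ≥0∞) ^ k) ^ s ≠ 0 := fun k => by
    simp [ENNReal.rpow_eq_zero_iff, hs.not_gt]
  choose hfin hcard using fun k : ℕ =>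
    ENNReal.finset_card_const_le_le_of_tsum_le hctop hsum (hpow0 k)
  refine ⟨3 ^ n * c.toReal, by positivity, fun k => (hfin k).toFinset.biUnion fun p =>
    if κ p = k then F p else ∅, fun k => ?_, fun x hx => ?_⟩
  · have h1 : ((hfin k).toFinset.card : ℝ) ≤ c.toReal * 2 ^ (k * s) := by
      have h2 := ENNReal.toReal_mono (by finiteness [hpow0 k]) (hcard k)
      rw [ENNReal.toReal_natCast, ENNReal.toReal_div, ← ENNReal.toReal_rpow,
        ENNReal.toReal_pow] at h2
      refine h2.trans_eq ?_
      rw [div_eq_mul_inv, ENNReal.toReal_inv, ENNReal.toReal_ofNat, inv_pow, Real.inv_rpow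
        (by positivity), inv_inv, ← Real.rpow_natCast, ← Real.rpow_mul two_pos.le]
    have h2 : ((hfin k).toFinset.biUnion fun p => if κ p = k then F p else ∅).card ≤
        (hfin k).toFinset.card * 3 ^ n := by
      refine Finset.card_biUnion_le_card_mul _ _ _ fun p _ => ?_
      split_ifs
      · exact hF1 p
      · simp
    calc _ ≤ ((hfin k).toFinset.card : ℝ) * 3 ^ n := by exact_mod_cast h2
      _ ≤ c.toReal * 2 ^ (k * s) * 3 ^ n := by gcongr
      _ = _ := by ring
  · rw [frequently_atTop]
    intro j
    obtain ⟨m, hm⟩ := mem_iUnion.1 (ht1 j hx)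
    refine ⟨κ (j, m), hκ1 (j, m), Finset.mem_biUnion.2 ⟨(j, m), ?_, ?_⟩⟩
    · rw [Set.Finite.mem_toFinset]
      simp
    · rw [if_pos rfl]
      exact hF2 (j, m) x hm

lemma norm_sub_inner_smul_le {n : ℕ} {v x y : E n} {ε C : ℝ} (hv : ‖v‖ ≤ 1) (hε0 : 0 ≤ ε)
    (hε : ε ≤ 1) (hxy : ‖x - y‖ ≤ C) (hy : ‖y - ⟪y, v⟫ • v‖ ≤ ε * |⟪y, v⟫|) :
    ‖x - ⟪x, v⟫ • v‖ ≤ ε * |⟪x, v⟫| + 3 * C := by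
  have h1 : |⟪x - y, v⟫| ≤ C := by
    refine (abs_real_inner_le_norm _ _).trans ?_
    nlinarith [norm_nonneg (x - y), norm_nonneg v]
  have h2 : x - ⟪x, v⟫ • v = (y - ⟪y, v⟫ • v) + ((x - y) - ⟪x - y, v⟫ • v) := by
    rw [inner_sub_left, _root_.sub_smul]; abel
  have h3 : ‖⟪x - y, v⟫ • v‖ ≤ C := by
    rw [norm_smul, Real.norm_eq_abs]
    nlinarith [abs_nonneg ⟪x - y, v⟫, norm_nonneg v]
  have h4 : |⟪y, v⟫| ≤ |⟪x, v⟫| + C := by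
    have : ⟪y, v⟫ = ⟪x, v⟫ - ⟪x - y, v⟫ := by rw [inner_sub_left]; ring
    rw [this]
    exact (abs_sub _ _).trans (by linarith)
  rw [h2]
  have h5 := norm_add_le (y - ⟪y, v⟫ • v) ((x - y) - ⟪x - y, v⟫ • v)
  have h6 := norm_sub_le (x - y) (⟪x - y, v⟫ • v)
  have h7 : ε * |⟪y, v⟫| ≤ ε * (|⟪x, v⟫| + C) := by gcongr
  have h8 : 0 ≤ C := (norm_nonneg _).trans hxy
  nlinarith

lemma abs_cellAt_sub_le {n : ℕ} (k : ℕ) (x y : E n) :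
    ‖(latticeVec (cellAt k x) - latticeVec (cellAt k y)) - (2 : ℝ) ^ k • (x - y)‖ ≤ n := by
  refine (norm_le_of_forall_abs_le (R := 1) fun i => ?_).trans_eq (mul_one _)
  have h4 := Int.floor_le ((2 : ℝ) ^ k * x i)
  have h5 := Int.lt_floor_add_one ((2 : ℝ) ^ k * x i)
  have h6 := Int.floor_le ((2 : ℝ) ^ k * y i)
  have h7 := Int.lt_floor_add_one ((2 : ℝ) ^ k * y i)
  simp only [latticeVec, cellAt, PiLp.sub_apply, PiLp.smul_apply, smul_eq_mul]
  rw [abs_le]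
  constructor <;> linarith

lemma norm_sub_le_of_cellAt_eq {n : ℕ} {k : ℕ} {x y : E n} (h : cellAt k x = cellAt k y) :
    ‖x - y‖ ≤ n * (2⁻¹ : ℝ) ^ k := by
  have h1 := abs_cellAt_sub_le k x y
  rw [h, sub_self, zero_sub, norm_neg, norm_smul, norm_pow, Real.norm_ofNat] at h1
  rw [inv_pow, ← div_eq_mul_inv, le_div_iff₀ (by positivity)]
  linarith

/-- A curve almost parallel to `v` spends zero time in the part of the `H k` where `v` is not
among the prescribed directions. -/
lemma volume_setOf_frequently_eq_zero {n : ℕ} {ε κ C δ : ℝ} {v : E n} (hv : ‖v‖ ≤ 1)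
    (hε0 : 0 ≤ ε) (hε : ε ≤ 1) (hκ : 0 < κ) (hδ : 0 < δ)
    (H : ℕ → Finset (Fin n → ℤ)) (j : ℕ → (Fin n → ℤ) → Finset (E n))
    (hj : ∀ k, ∀ T ⊆ H k, (∀ p ∈ T, v ∉ j k p) → IsTube ε (3 * n) v T →
      (T.card : ℝ) ≤ C * 2 ^ (k * (1 - κ)))
    {A : Set ℝ} {σ : ℝ → E n} (hσ : ∀ s ∈ A, ∀ t ∈ A, δ * |s - t| ≤ ‖σ s - σ t‖)
    (hσv : ∀ s ∈ A, ∀ t ∈ A,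
      ‖(σ s - σ t) - ⟪σ s - σ t, v⟫ • v‖ ≤ ε * |⟪σ s - σ t, v⟫|) :
    volume {t | ∃ᶠ k in atTop, t ∈ A ∧ cellAt k (σ t) ∈ H k ∧ v ∉ j k (cellAt k (σ t))} = 0 := by
  classical
  have hbound : ∀ k : ℕ, volume {t | t ∈ A ∧ cellAt k (σ t) ∈ H k ∧ v ∉ j k (cellAt k (σ t))} ≤
      ENNReal.ofReal (C * (n / δ) * ((2 : ℝ) ^ (-κ)) ^ k) := by
    intro k
    set T := (H k).filter fun p => v ∉ j k p ∧ ∃ t ∈ A, cellAt k (σ t) = p with hT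
    have hcard := hj k T (Finset.filter_subset _ _)
      (fun p hp => (Finset.mem_filter.1 hp).2.1) ?_
    · have hsub : {t | t ∈ A ∧ cellAt k (σ t) ∈ H k ∧ v ∉ j k (cellAt k (σ t))} ⊆
          ⋃ p ∈ T, {t | t ∈ A ∧ cellAt k (σ t) = p} := by
        rintro t ⟨ht1, ht2, ht3⟩
        exact mem_iUnion₂.2 ⟨cellAt k (σ t), Finset.mem_filter.2 ⟨ht2, ht3, t, ht1, rfl⟩, ht1, rfl⟩
      have hone : ∀ p ∈ T, volume {t | t ∈ A ∧ cellAt k (σ t) = p} ≤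
          ENNReal.ofReal (n / δ * 2⁻¹ ^ k) := by
        intro p _
        refine (Real.volume_le_diam _).trans (ediam_le ?_)
        rintro s ⟨hs1, hs2⟩ t ⟨ht1, ht2⟩
        rw [edist_dist, Real.dist_eq]
        refine ENNReal.ofReal_le_ofReal ?_
        have := (hσ s hs1 t ht1).trans (norm_sub_le_of_cellAt_eq (hs2.trans ht2.symm))
        rw [div_mul_eq_mul_div, le_div_iff₀ hδ]
        linarith
      refine (measure_mono hsub).trans ((measure_biUnion_finset_le _ _).trans
        ((Finset.sum_le_sum hone).trans ?_))
      rw [Finset.sum_const, nsmul_eq_mul, ← ENNReal.ofReal_natCast, ← ENNReal.ofReal_mul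
        (by positivity)]
      refine ENNReal.ofReal_le_ofReal ?_
      calc (T.card : ℝ) * (n / δ * 2⁻¹ ^ k)
          ≤ C * 2 ^ (k * (1 - κ)) * (n / δ * 2⁻¹ ^ k) := by gcongr
        _ = C * (n / δ) * (2 ^ (k * (1 - κ)) * 2⁻¹ ^ k) := by ring
        _ = _ := by
          congr 1
          rw [← Real.rpow_natCast, ← Real.rpow_natCast, ← Real.rpow_mul two_pos.le,
            Real.inv_rpow two_pos.le, ← Real.rpow_neg two_pos.le, ← Real.rpow_add two_pos]
          congr 1; ring
    · intro p hp q hq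
      obtain ⟨_, _, s, hs, rfl⟩ := Finset.mem_filter.1 hp
      obtain ⟨_, _, t, ht, rfl⟩ := Finset.mem_filter.1 hq
      refine norm_sub_inner_smul_le hv hε0 hε (abs_cellAt_sub_le k (σ s) (σ t)) ?_
      rw [inner_smul_left, conj_trivial, ← smul_smul, ← smul_sub, norm_smul]
      simp only [abs_mul, norm_pow, Real.norm_ofNat, abs_pow, Nat.abs_ofNat]
      have := hσv s hs t ht
      calc _ ≤ (2 : ℝ) ^ k * (ε * |⟪σ s - σ t, v⟫|) := by gcongr
        _ = _ := by ring
  refine measure_setOfPred_frequently_eq_zero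
    (p := fun k t => t ∈ A ∧ cellAt k (σ t) ∈ H k ∧ v ∉ j k (cellAt k (σ t))) ?_
  refine ne_top_of_le_ne_top ?_ (ENNReal.tsum_le_tsum hbound)
  have hr : (2 : ℝ) ^ (-κ) < 1 := Real.rpow_lt_one_of_one_lt_of_neg one_lt_two (by linarith)
  exact ((summable_geometric_of_lt_one (by positivity) hr).mul_left _).tsum_ofReal_ne_top

/-- A finite set of directions resolving all directions up to `η`. -/
lemma exists_finite_net {n : ℕ} {η : ℝ} (hη : 0 < η) :
    ∃ V : Finset (E n), (∀ v ∈ V, ‖v‖ = 1) ∧ ∀ u : E n, ‖u‖ = 1 → ∃ v ∈ V, ‖u - v‖ < η := by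
  obtain ⟨t, ht, htf, hcov⟩ := finite_cover_balls_of_compact (isCompact_sphere (0 : E n) 1) hη
  refine ⟨htf.toFinset, fun v hv => ?_, fun u hu => ?_⟩
  · simpa using ht ((Set.Finite.mem_toFinset htf).1 hv)
  · obtain ⟨v, hv, hvu⟩ := mem_iUnion₂.1 (hcov (show u ∈ sphere (0 : E n) 1 by simpa using hu))
    exact ⟨v, htf.mem_toFinset.2 hv, by rwa [mem_ball, dist_eq_norm] at hvu⟩

lemma norm_sub_inner_smul_le_of_near {n : ℕ} {v y : E n} {r η : ℝ} (hv : ‖v‖ = 1)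
    (hη : η ≤ 1 / 2) (h : ‖y - r • v‖ ≤ η * |r|) :
    ‖y - ⟪y, v⟫ • v‖ ≤ 4 * η * |⟪y, v⟫| := by
  have h0 : ⟪y, v⟫ = r + ⟪y - r • v, v⟫ := by
    rw [inner_sub_left, inner_smul_left, real_inner_self_eq_norm_sq, hv]; simp
  have h1 : |⟪y - r • v, v⟫| ≤ η * |r| := by
    have := abs_real_inner_le_norm (y - r • v) v
    rw [hv, mul_one] at this
    exact this.trans h
  have h2 : y - ⟪y, v⟫ • v = (y - r • v) - ⟪y - r • v, v⟫ • v := by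
    conv_lhs => rw [h0, _root_.add_smul]
    abel
  have h3 : ‖y - ⟪y, v⟫ • v‖ ≤ 2 * (η * |r|) := by
    rw [h2]
    refine (norm_sub_le _ _).trans ?_
    rw [norm_smul, hv, Real.norm_eq_abs]
    linarith
  have h4 : |r| ≤ |⟪y, v⟫| + η * |r| := by
    have : r = ⟪y, v⟫ - ⟪y - r • v, v⟫ := by rw [h0]; ring
    calc |r| = |⟪y, v⟫ - ⟪y - r • v, v⟫| := by rw [← this]
      _ ≤ |⟪y, v⟫| + |⟪y - r • v, v⟫| := abs_sub _ _
      _ ≤ _ := by linarith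
  have hr := abs_nonneg r
  rcases hr.eq_or_lt with hr | hr
  · rw [← hr] at h3 h4
    have h5 : ‖y - ⟪y, v⟫ • v‖ ≤ 0 := by linarith
    have h6 : ⟪y, v⟫ = 0 := by
      rw [← hr, mul_zero] at h1
      rw [h0, abs_eq_zero.1 (le_antisymm h1 (abs_nonneg _)), add_zero]
      exact abs_eq_zero.1 hr.symm
    rw [h6] at h5 ⊢
    simpa using h5
  · have hη0 : 0 ≤ η := by
      by_contra hneg
      push Not at hneg
      have := (norm_nonneg _).trans h
      nlinarith
    have h5 : |r| ≤ 2 * |⟪y, v⟫| := by nlinarith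
    calc _ ≤ 2 * (η * |r|) := h3
      _ ≤ 2 * (η * (2 * |⟪y, v⟫|)) := by gcongr
      _ = _ := by ring

lemma ae_exists_direction {n : ℕ} {w : E n} {θ δ η : ℝ} (hw : ‖w‖ = 1) (hη0 : 0 < η)
    (hη : η ≤ 1 / 4) (hηθ : 2 * η < θ) (hθ : θ < 1) (hδ : 0 < δ) {V : Finset (E n)}
    (hV : ∀ v ∈ V, ‖v‖ = 1) (hnet : ∀ u : E n, ‖u‖ = 1 → ∃ v ∈ V, ‖u - v‖ < η)
    {K : Set ℝ} {σ : ℝ → E n} {L : ℝ≥0} (hL : LipschitzOnWith L σ K)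
    (hσ : ∀ s ∈ K, ∀ t ∈ K, δ * |s - t| ≤ ‖σ s - σ t‖)
    (hcone : ∀ s ∈ K, ∀ t ∈ K, θ * ‖σ s - σ t‖ ≤ |⟪σ s - σ t, w⟫|) :
    ∀ᵐ t, t ∈ K → ∃ v ∈ V, θ / 2 < |⟪v, w⟫| ∧ ∀ᶠ s in 𝓝[K] t,
      ‖(σ s - σ t) - ⟪σ s - σ t, v⟫ • v‖ ≤ 8 * η * |⟪σ s - σ t, v⟫| := by
  filter_upwards [hL.ae_differentiableWithinAt_of_mem_real] with t ht htK
  obtain ⟨u, hu⟩ : ∃ u, HasDerivWithinAt σ u K t := ⟨_, (ht htK).hasDerivWithinAt⟩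
  by_cases hacc : (𝓝[K \ {t}] t).NeBot
  swap
  · obtain ⟨v, hvV, hvw⟩ := hnet w hw
    refine ⟨v, hvV, ?_, ?_⟩
    · have h1 : ⟪v, w⟫ = 1 - ⟪w - v, w⟫ := by
        rw [inner_sub_left, real_inner_self_eq_norm_sq, hw]; ring
      have h2 := abs_real_inner_le_norm (w - v) w
      rw [hw, mul_one] at h2
      have h3 := (abs_le.1 (h2.trans hvw.le)).2
      have h4 := le_abs_self ⟪v, w⟫
      linarith
    · rw [not_neBot] at hacc
      rw [← insert_eq_of_mem htK, ← insert_sdiff_singleton, nhdsWithin_insert, hacc, sup_bot_eq,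
        eventually_pure]
      simp
  have hslope := hasDerivWithinAt_iff_tendsto_slope.1 hu
  have hunorm : δ ≤ ‖u‖ := by
    refine ge_of_tendsto hslope.norm ?_
    filter_upwards [self_mem_nhdsWithin] with s hs
    have hne : 0 < |s - t| := abs_pos.2 (sub_ne_zero.2 hs.2)
    rw [slope_def_module, norm_smul, norm_inv, Real.norm_eq_abs, ← div_eq_inv_mul,
      le_div_iff₀ hne]
    exact hσ s hs.1 t htK
  have hucone : θ * ‖u‖ ≤ |⟪u, w⟫| := by
    refine le_of_tendsto_of_tendsto (hslope.norm.const_mul θ)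
      ((hslope.inner tendsto_const_nhds).abs) ?_
    filter_upwards [self_mem_nhdsWithin] with s hs
    rw [slope_def_module, norm_smul, inner_smul_left, abs_mul]
    simp only [norm_inv, Real.norm_eq_abs, conj_trivial, abs_inv]
    have := hcone s hs.1 t htK
    have h0 : 0 ≤ |s - t|⁻¹ := by positivity
    nlinarith
  have hu0 : 0 < ‖u‖ := hδ.trans_le hunorm
  have hû : ‖(‖u‖⁻¹ : ℝ) • u‖ = 1 := by
    rw [norm_smul, norm_inv, norm_norm, inv_mul_cancel₀ hu0.ne']
  obtain ⟨v, hvV, hvu⟩ := hnet _ hû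
  refine ⟨v, hvV, ?_, ?_⟩
  · have h1 : ⟪(‖u‖⁻¹ : ℝ) • u, w⟫ = ⟪v, w⟫ + ⟪(‖u‖⁻¹ : ℝ) • u - v, w⟫ := by
      rw [inner_sub_left]; ring
    have h2 := abs_real_inner_le_norm ((‖u‖⁻¹ : ℝ) • u - v) w
    rw [hw, mul_one] at h2
    have h3 : θ ≤ |⟪(‖u‖⁻¹ : ℝ) • u, w⟫| := by
      rw [inner_smul_left, abs_mul]
      simp only [conj_trivial, abs_inv, abs_norm]
      rw [← div_eq_inv_mul, le_div_iff₀ hu0]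
      exact hucone
    have h4 := abs_add_le ⟪v, w⟫ ⟪(‖u‖⁻¹ : ℝ) • u - v, w⟫
    rw [← h1] at h4
    linarith
  · have hlo := (hasDerivWithinAt_iff_isLittleO.1 hu).def (mul_pos hη0 hδ)
    filter_upwards [hlo] with s hs
    have h1 : ‖(σ s - σ t) - ((s - t) * ‖u‖) • v‖ ≤ 2 * η * |(s - t) * ‖u‖| := by
      have h2 : (σ s - σ t) - ((s - t) * ‖u‖) • v = (σ s - σ t - (s - t) • u) +
          ((s - t) * ‖u‖) • ((‖u‖⁻¹ : ℝ) • u - v) := by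
        rw [smul_sub, smul_smul, mul_assoc, mul_inv_cancel₀ hu0.ne', mul_one]; abel
      rw [h2]
      refine (norm_add_le _ _).trans ?_
      rw [norm_smul, Real.norm_eq_abs, abs_mul, abs_norm]
      rw [Real.norm_eq_abs] at hs
      have h3 : η * δ * |s - t| ≤ η * ‖u‖ * |s - t| := by gcongr
      have h4 : |s - t| * ‖u‖ * ‖(‖u‖⁻¹ : ℝ) • u - v‖ ≤ |s - t| * ‖u‖ * η := by gcongr
      linarith
    have := norm_sub_inner_smul_le_of_near (hV v hvV) (by linarith) h1
    linarith

lemma measurable_cellAt {n : ℕ} (k : ℕ) : Measurable (cellAt (n := n) k) := by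
  refine measurable_pi_lambda _ fun i => Int.measurable_floor.comp ?_
  exact (by fun_prop : Continuous fun x : E n => (2 : ℝ) ^ k * x i).measurable

lemma Fragment.fn_mem_graph {Y : Type*} [MetricSpace Y] (γ : Fragment Y) {t : ℝ} (ht : t ∈ γ.dom) :
    (t, γ.fn t) ∈ γ.graph := by
  have h : ∃ x, (t, x) ∈ γ.graph := by
    obtain ⟨p, hp, rfl⟩ := ht
    exact ⟨p.2, hp⟩
  unfold Fragment.fn
  rw [dif_pos h]
  exact h.choose_spec

lemma Fragment.fn_eq {Y : Type*} [MetricSpace Y] (γ : Fragment Y) {p : ℝ × Y} (hp : p ∈ γ.graph) :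
    γ.fn p.1 = p.2 := by
  have h1 := γ.fn_mem_graph ⟨p, hp, rfl⟩
  have h2 := (γ.2.2 _ h1 _ hp).2
  rw [sub_self, abs_zero, mul_zero] at h2
  exact dist_le_zero.1 h2

lemma Fragment.lipschitzOnWith_fn {Y : Type*} [MetricSpace Y] (γ : Fragment Y) :
    LipschitzOnWith 2 γ.fn γ.dom := by
  refine LipschitzOnWith.of_dist_le_mul fun s hs t ht => ?_
  exact (γ.2.2 _ (γ.fn_mem_graph hs) _ (γ.fn_mem_graph ht)).2

/-- The exceptional parameters of a cone curve for the set with prescribed directions `J`. -/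
lemma volume_prescribed_eq_zero {n : ℕ} {w : E n} {θ δ ε C₀ : ℝ} (hw : ‖w‖ = 1)
    (hε0 : 0 < ε) (hεθ : ε ≤ θ) (hθ : θ < 1) (hδ : 0 < δ) (hC₀ : C₀ = 3 * n) {V : Finset (E n)}
    (hV : ∀ v ∈ V, ‖v‖ = 1) (hnet : ∀ u : E n, ‖u‖ = 1 → ∃ v ∈ V, ‖u - v‖ < ε / 8)
    {J : Finset (E n)} (hJ : ∀ v ∈ J, |⟪v, w⟫| ≤ θ / 2)
    (H : ℕ → ℕ → Finset (Fin n → ℤ)) (j : ℕ → ℕ → (Fin n → ℤ) → Finset (E n))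
    (hj : ∀ B, ∃ C κ : ℝ, 0 < κ ∧ ∀ k, ∀ v ∈ V, ∀ T ⊆ H B k, (∀ p ∈ T, v ∉ j B k p) →
      IsTube ε C₀ v T → (T.card : ℝ) ≤ C * 2 ^ (k * (1 - κ)))
    {K : Set ℝ} {σ : ℝ → E n} {L : ℝ≥0} (hL : LipschitzOnWith L σ K)
    (hσ : ∀ s ∈ K, ∀ t ∈ K, δ * |s - t| ≤ ‖σ s - σ t‖)
    (hcone : ∀ s ∈ K, ∀ t ∈ K, θ * ‖σ s - σ t‖ ≤ |⟪σ s - σ t, w⟫|) :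
    volume {t | t ∈ K ∧ ∃ B, ∃ᶠ k in atTop,
      cellAt k (σ t) ∈ H B k ∧ j B k (cellAt k (σ t)) = J} = 0 := by
  subst hC₀
  have hae := ae_exists_direction (η := ε / 8) hw (by linarith) (by linarith) (by linarith) hθ hδ
    hV hnet hL hσ hcone
  let A : E n → ℕ → ℤ → Set ℝ := fun v m i => {t | t ∈ K ∧ ⌊((m : ℝ) + 1) * t⌋ = i ∧
    ∀ s ∈ K, |s - t| < 1 / ((m : ℝ) + 1) →
      ‖(σ s - σ t) - ⟪σ s - σ t, v⟫ • v‖ ≤ ε * |⟪σ s - σ t, v⟫|}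
  have hzero : ∀ B, ∀ v ∈ V, ∀ m i, volume {t | ∃ᶠ k in atTop, t ∈ A v m i ∧
      cellAt k (σ t) ∈ H B k ∧ v ∉ j B k (cellAt k (σ t))} = 0 := by
    intro B v hv m i
    obtain ⟨C, κ, hκ, hC⟩ := hj B
    refine volume_setOf_frequently_eq_zero (hV v hv).le hε0.le (by linarith) hκ hδ (H B) (j B)
      (fun k => hC k v hv) (fun s hs t ht => hσ s hs.1 t ht.1) fun s hs t ht => ?_
    refine ht.2.2 s hs.1 ?_
    have h1 := Int.abs_sub_lt_one_of_floor_eq_floor (hs.2.1.trans ht.2.1.symm)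
    have hm : (0 : ℝ) < (m : ℝ) + 1 := by positivity
    rw [← mul_sub, abs_mul, abs_of_pos hm] at h1
    rw [lt_div_iff₀ hm]
    linarith
  have hnull : volume (⋃ B : ℕ, ⋃ v ∈ V, ⋃ m : ℕ, ⋃ i : ℤ, {t | ∃ᶠ k in atTop, t ∈ A v m i ∧
      cellAt k (σ t) ∈ H B k ∧ v ∉ j B k (cellAt k (σ t))}) = 0 := by
    rw [measure_iUnion_null_iff]
    intro B
    refine (measure_biUnion_null_iff V.countable_toSet).2 fun v hv => ?_
    rw [measure_iUnion_null_iff]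
    intro m
    rw [measure_iUnion_null_iff]
    exact hzero B v hv m
  have hae2 : ∀ᵐ t, t ∉ (⋃ B : ℕ, ⋃ v ∈ V, ⋃ m : ℕ, ⋃ i : ℤ, {t | ∃ᶠ k in atTop, t ∈ A v m i ∧
      cellAt k (σ t) ∈ H B k ∧ v ∉ j B k (cellAt k (σ t))}) := measure_eq_zero_iff_ae_notMem.1 hnull
  refine measure_eq_zero_iff_ae_notMem.2 ?_
  filter_upwards [hae, hae2] with t h1 h2
  rintro ⟨htK, B, hB⟩
  obtain ⟨v, hvV, hvw, hev⟩ := h1 htK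
  obtain ⟨r, hr, hball⟩ := Metric.eventually_nhds_iff.1 (eventually_nhdsWithin_iff.1 hev)
  obtain ⟨m, hm⟩ := exists_nat_one_div_lt hr
  refine h2 (mem_iUnion.2 ⟨B, mem_iUnion₂.2 ⟨v, hvV, mem_iUnion₂.2 ⟨m, ⌊((m : ℝ) + 1) * t⌋,
    hB.mono fun k hk => ⟨⟨htK, rfl, fun s hs hst => ?_⟩, hk.1, fun hvj => ?_⟩⟩⟩⟩)
  · have := hball (y := s) (by rw [Real.dist_eq]; exact hst.trans hm) hs
    linarith
  · rw [hk.2] at hvj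
    exact (hJ v hvj).not_gt hvw

/-- A Lipschitz map onto a set of dimension less than `n` has only singular sets. -/
theorem memScal_univ {Y : Type*} [MetricSpace Y] [MeasurableSpace Y] [BorelSpace Y] {n : ℕ}
    (hn : 1 ≤ n) {φ : Y → E n} {L : ℝ≥0} (hφ : LipschitzWith L φ)
    (hdim : dimH (univ : Set Y) < n) : MemScal φ univ := by
  classical
  refine ⟨MeasurableSet.univ, fun θ hθ => ?_⟩
  obtain ⟨s, hs0, hsn, hs⟩ : ∃ s : ℝ, 0 < s ∧ s < n ∧ μH[s] (range φ) = 0 := by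
    obtain ⟨s, hs1, hs2⟩ := ENNReal.lt_iff_exists_nnreal_btwn.1 (hφ.dimH_range_le.trans_lt hdim)
    refine ⟨s, ?_, by exact_mod_cast hs2, hausdorffMeasure_of_dimH_lt hs1⟩
    exact NNReal.coe_pos.2 (ENNReal.coe_pos.1 (lt_of_le_of_lt zero_le hs1))
  obtain ⟨K, hK, H₀, hH₀, hinf₀⟩ := exists_cells_of_hausdorffMeasure_eq_zero hs0 hs
  obtain ⟨ε, hε0, hεθ, hsplit⟩ := exists_sparseSplitting hn (half_pos hθ.1) hsn
    (C₀ := 3 * n) (by linarith [Nat.cast_nonneg (α := ℝ) n]) hθ.1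
  obtain ⟨V, hV, hnet⟩ := exists_finite_net (n := n) (by linarith : 0 < ε / 8)
  let H : ℕ → ℕ → Finset (Fin n → ℤ) := fun B k =>
    (H₀ k).filter fun p => ∀ i, |(p i : ℝ)| ≤ ((B : ℝ) + 1) * 2 ^ k
  choose C κ _ hκ hC using fun B : ℕ => hsplit V (fun v hv => (hV v hv).le) K ((B : ℝ) + 1) hK
  choose j hj1 hj2 using fun B k => hC B k (H B k) (fun p hp => (Finset.mem_filter.1 hp).2)
    ((Nat.cast_le.2 (Finset.card_filter_le _ _)).trans (hH₀ k))
  let A : Finset (E n) → Set (E n) := fun J =>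
    {x | ∃ B, ∃ᶠ k in atTop, cellAt k x ∈ H B k ∧ j B k (cellAt k x) = J}
  have hA : ∀ J, MeasurableSet (A J) := by
    intro J
    have : A J = ⋃ B : ℕ, ⋂ a : ℕ, ⋃ k : ℕ, ⋃ _ : a ≤ k,
        cellAt k ⁻¹' {p | p ∈ H B k ∧ j B k p = J} := by
      ext x
      simp [A, frequently_atTop, and_left_comm]
    rw [this]
    exact MeasurableSet.iUnion fun B => MeasurableSet.iInter fun a => MeasurableSet.iUnion fun k =>
      MeasurableSet.iUnion fun _ => measurable_cellAt k (Set.to_countable _).measurableSet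
  have hcover : ∀ y, ∃ J ∈ V.powerset, NearHyperplane (θ / 2) (J : Set (E n)) ∧ φ y ∈ A J := by
    intro y
    obtain ⟨B, hB⟩ := exists_nat_ge ‖φ y‖
    have hfreq : ∃ᶠ k in atTop, cellAt k (φ y) ∈ H B k :=
      (hinf₀ _ (mem_range_self y)).mono fun k hk => Finset.mem_filter.2
        ⟨hk, abs_cellAt_le fun i => (PiLp.norm_apply_le (φ y) i).trans hB⟩
    by_contra! hcon
    have hev : ∀ᶠ k in atTop, ∀ J ∈ V.powerset, NearHyperplane (θ / 2) (J : Set (E n)) →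
        ¬ (cellAt k (φ y) ∈ H B k ∧ j B k (cellAt k (φ y)) = J) := by
      rw [Filter.eventually_all_finset]
      intro J hJ
      by_cases hnear : NearHyperplane (θ / 2) (J : Set (E n))
      · have := hcon J hJ hnear
        refine (not_frequently.1 fun h => this ⟨B, h⟩).mono fun k hk _ => hk
      · exact Eventually.of_forall fun k h => absurd h hnear
    obtain ⟨k, hk1, hk2⟩ := (hfreq.and_eventually hev).exists
    exact hk2 _ (Finset.mem_powerset.2 (hj1 B k _).1) (hj1 B k _).2 ⟨hk1, rfl⟩
  have hnull : ∀ (J : Finset (E n)) (w : E n), ‖w‖ = 1 → (∀ v ∈ J, |⟪v, w⟫| ≤ θ / 2) →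
      ConeNull φ (cone w θ) (φ ⁻¹' A J) := by
    intro J w hw hJ γ hγ
    obtain ⟨δ, hδ, hγ⟩ := hγ
    have hvol := volume_prescribed_eq_zero hw hε0 hεθ hθ.2 hδ rfl hV hnet hJ H j
      (fun B => ⟨C B, κ B, hκ B, fun k v hv => hj2 B k v hv⟩)
      (hφ.comp_lipschitzOnWith γ.lipschitzOnWith_fn)
      (fun s hs t ht => ?_) (fun s hs t ht => ?_)
    · set N := {t | t ∈ γ.dom ∧ ∃ B, ∃ᶠ k in atTop, cellAt k ((φ ∘ γ.fn) t) ∈ H B k ∧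
        j B k (cellAt k ((φ ∘ γ.fn) t)) = J} with hN
      have hsub : γ.im ∩ φ ⁻¹' A J ⊆ γ.fn '' N := by
        rintro _ ⟨⟨p, hp, rfl⟩, hpA⟩
        refine ⟨p.1, ⟨⟨p, hp, rfl⟩, ?_⟩, γ.fn_eq hp⟩
        simp only [Function.comp_apply, γ.fn_eq hp]
        exact hpA
      refine measure_mono_null hsub (le_antisymm ?_ zero_le)
      refine ((γ.lipschitzOnWith_fn.mono fun t ht => ht.1).hausdorffMeasure_image_le
        zero_le_one).trans ?_
      rw [hausdorffMeasure_real, hvol, mul_zero]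
    · have := (hγ _ (γ.fn_mem_graph hs) _ (γ.fn_mem_graph ht)).2
      simpa using this
    · exact (hγ _ (γ.fn_mem_graph hs) _ (γ.fn_mem_graph ht)).1
  let e := V.powerset.equivFin
  obtain ⟨w₀, hw₀⟩ : ∃ w₀ : E n, ‖w₀‖ = 1 := ⟨EuclideanSpace.single ⟨0, hn⟩ 1, by simp⟩
  have hchoice : ∀ J : Finset (E n), ∃ w : E n, ‖w‖ = 1 ∧
      (NearHyperplane (θ / 2) (J : Set (E n)) → ∀ v ∈ J, |⟪v, w⟫| ≤ θ / 2) := by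
    intro J
    by_cases h : NearHyperplane (θ / 2) (J : Set (E n))
    · obtain ⟨w, hw, hJ⟩ := h
      exact ⟨w, hw, fun _ => hJ⟩
    · exact ⟨w₀, hw₀, fun h' => absurd h' h⟩
  choose w hw hwJ using hchoice
  refine ⟨V.powerset.card, fun i => if NearHyperplane (θ / 2) ((e.symm i : Finset (E n)) : Set (E n))
    then φ ⁻¹' A (e.symm i) else ∅, fun i => w (e.symm i), ?_, fun i => ⟨?_, hw _, ?_⟩⟩
  · refine (eq_univ_of_forall fun y => ?_).symm
    obtain ⟨J, hJV, hJ, hy⟩ := hcover y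
    refine mem_iUnion.2 ⟨e ⟨J, hJV⟩, ?_⟩
    simp only [Equiv.symm_apply_apply, if_pos hJ]
    exact hy
  · beta_reduce
    split_ifs
    · exact hφ.continuous.measurable (hA _)
    · exact MeasurableSet.empty
  · beta_reduce
    split_ifs with h
    · exact hnull _ _ (hw _) (hwJ _ h)
    · intro γ _
      simp

/-- The increments of `f` at `x` are `o(d(x, ·))`. -/
def FlatAt {Y : Type*} [MetricSpace Y] (f : Y → ℝ) (x : Y) : Prop :=
  ∀ ε > 0, ∀ᶠ y in 𝓝 x, |f y - f x| ≤ ε * dist y x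

lemma not_lipAt_pos_iff {Y : Type*} [MetricSpace Y] {f : Y → ℝ} {K : ℝ≥0} (hf : LipschitzWith K f)
    (x : Y) : ¬ 0 < lipAt f x ↔ FlatAt f x := by
  set q : ℝ → ℝ := fun r => sSup ((fun y => |f y - f x| / r) '' Metric.closedBall x r) with hq
  have hle : ∀ r > 0, ∀ y ∈ closedBall x r, |f y - f x| / r ≤ K := by
    intro r hr y hy
    rw [div_le_iff₀ hr]
    have h1 := hf.dist_le_mul y x
    rw [Real.dist_eq] at h1
    exact h1.trans (by gcongr; exact mem_closedBall.1 hy)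
  have hbdd : ∀ r > 0, BddAbove ((fun y => |f y - f x| / r) '' closedBall x r) := fun r hr =>
    ⟨K, by rintro _ ⟨y, hy, rfl⟩; exact hle r hr y hy⟩
  have hne : ∀ r > 0, ((fun y => |f y - f x| / r) '' closedBall x r).Nonempty := fun r hr =>
    ⟨_, x, mem_closedBall_self hr.le, rfl⟩
  have hpos : ∀ᶠ r in 𝓝[>] (0 : ℝ), 0 < r := self_mem_nhdsWithin
  have hq0 : ∀ᶠ r in 𝓝[>] (0 : ℝ), 0 ≤ q r := by
    filter_upwards [hpos] with r hr
    exact Real.sSup_nonneg (by rintro _ ⟨y, _, rfl⟩; positivity)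
  have hqK : ∀ᶠ r in 𝓝[>] (0 : ℝ), q r ≤ K := by
    filter_upwards [hpos] with r hr
    exact csSup_le (hne r hr) (by rintro _ ⟨y, hy, rfl⟩; exact hle r hr y hy)
  have hB : IsBoundedUnder (· ≤ ·) (𝓝[>] (0 : ℝ)) q := isBoundedUnder_of_eventually_le hqK
  have hC : IsCoboundedUnder (· ≤ ·) (𝓝[>] (0 : ℝ)) q :=
    (isBoundedUnder_of_eventually_ge hq0).isCoboundedUnder_le
  rw [not_lt]
  constructor
  · intro h ε hε
    have h1 : ∀ᶠ r in 𝓝[>] (0 : ℝ), q r < ε := eventually_lt_of_limsup_lt (h.trans_lt hε) hB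
    obtain ⟨ρ, hρ, hρ2⟩ := mem_nhdsGT_iff_exists_Ioo_subset.1 h1
    filter_upwards [ball_mem_nhds x (mem_Ioi.1 hρ)] with y hy
    rcases eq_or_ne y x with rfl | hyx
    · simp
    have hd := dist_pos.2 hyx
    have h2 : q (dist y x) < ε := hρ2 ⟨hd, mem_ball.1 hy⟩
    have h3 : |f y - f x| / dist y x ≤ q (dist y x) :=
      le_csSup (hbdd _ hd) ⟨y, mem_closedBall.2 le_rfl, rfl⟩
    exact (div_le_iff₀ hd).1 (h3.trans h2.le)
  · intro h
    refine le_of_forall_pos_le_add fun ε hε => ?_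
    rw [zero_add]
    refine limsup_le_of_le hC ?_
    obtain ⟨ρ, hρ, hball⟩ := Metric.eventually_nhds_iff.1 (h ε hε)
    filter_upwards [hpos, Ioo_mem_nhdsGT hρ] with r hr hrρ
    refine csSup_le (hne r hr) ?_
    rintro _ ⟨y, hy, rfl⟩
    rw [div_le_iff₀ hr]
    refine (hball (lt_of_le_of_lt (mem_closedBall.1 hy) hrρ.2)).trans ?_
    gcongr
    exact mem_closedBall.1 hy

lemma lipschitzWith_inner {Y : Type*} [MetricSpace Y] {n : ℕ} {φ : Y → E n} {K : ℝ≥0}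
    (hφ : LipschitzWith K φ) (D : E n) : LipschitzWith (‖D‖₊ * K) fun y => ⟪φ y, D⟫ := by
  refine LipschitzWith.of_dist_le_mul fun x y => ?_
  rw [Real.dist_eq, ← inner_sub_left]
  refine (abs_real_inner_le_norm _ _).trans ?_
  have := hφ.dist_le_mul x y
  rw [dist_eq_norm] at this
  push_cast
  nlinarith [norm_nonneg D]

lemma notMem_indSet_iff {Y : Type*} [MetricSpace Y] {n : ℕ} {φ : Y → E n} {K : ℝ≥0}
    (hφ : LipschitzWith K φ) (x : Y) :
    x ∉ indSet φ ↔ ∃ D : E n, ‖D‖ = 1 ∧ FlatAt (fun y => ⟪φ y, D⟫) x := by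
  simp only [indSet, mem_ofPred_eq, not_forall, exists_prop,
    not_lipAt_pos_iff (lipschitzWith_inner hφ _)]

lemma measurableSet_indSet {Y : Type*} [MetricSpace Y] [MeasurableSpace Y] [BorelSpace Y] {n : ℕ}
    {φ : Y → E n} {K : ℝ≥0} (hφ : LipschitzWith K φ) : MeasurableSet (indSet φ) := by
  choose V hV hnet using fun N : ℕ =>
    exists_finite_net (n := n) (Nat.one_div_pos_of_nat (α := ℝ) (n := N))
  let F : ℕ → E n → ℕ → Set Y := fun N D m => {x | ∀ y, dist y x < 1 / ((m : ℝ) + 1) →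
    |⟪φ y, D⟫ - ⟪φ x, D⟫| ≤ (K + 1) * (1 / ((N : ℝ) + 1)) * dist y x}
  have hF : ∀ N D m, IsClosed (F N D m) := by
    intro N D m
    have : F N D m = ⋂ y, ({x | 1 / ((m : ℝ) + 1) ≤ dist y x} ∪
        {x | |⟪φ y, D⟫ - ⟪φ x, D⟫| ≤ (K + 1) * (1 / ((N : ℝ) + 1)) * dist y x}) := by
      ext x
      simp only [F, mem_ofPred_eq, mem_iInter, mem_union]
      exact forall_congr' fun y => by rw [or_iff_not_imp_left, not_le]
    rw [this]
    have hc := hφ.continuous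
    exact isClosed_iInter fun y => (isClosed_le (by fun_prop) (by fun_prop)).union
      (isClosed_le (by fun_prop) (by fun_prop))
  have heq : (indSet φ)ᶜ = ⋂ N, ⋃ D ∈ V N, ⋃ m, F N D m := by
    ext x
    rw [mem_compl_iff, notMem_indSet_iff hφ]
    simp only [mem_iInter, mem_iUnion, exists_prop]
    have hswap : ∀ (D D' : E n) (y : Y), |⟪φ y, D⟫ - ⟪φ x, D⟫| ≤
        |⟪φ y, D'⟫ - ⟪φ x, D'⟫| + K * ‖D' - D‖ * dist y x := by
      intro D D' y
      have h1 : ⟪φ y, D⟫ - ⟪φ x, D⟫ = (⟪φ y, D'⟫ - ⟪φ x, D'⟫) - ⟪φ y - φ x, D' - D⟫ := by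
        simp only [inner_sub_left, inner_sub_right]; ring
      have h2 := abs_real_inner_le_norm (φ y - φ x) (D' - D)
      have h3 := hφ.dist_le_mul y x
      rw [dist_eq_norm] at h3
      rw [h1]
      refine (abs_sub _ _).trans (add_le_add le_rfl (h2.trans ?_))
      nlinarith [norm_nonneg (D' - D)]
    constructor
    · rintro ⟨D, hD, hflat⟩ N
      obtain ⟨v, hv, hDv⟩ := hnet N D hD
      obtain ⟨r, hr, hball⟩ := Metric.eventually_nhds_iff.1
        (hflat _ (Nat.one_div_pos_of_nat (α := ℝ) (n := N)))
      obtain ⟨m, hm⟩ := exists_nat_one_div_lt hr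
      refine ⟨v, hv, m, fun y hy => (hswap v D y).trans ?_⟩
      have h1 := hball (hy.trans hm)
      have h2 : K * ‖D - v‖ * dist y x ≤ K * (1 / ((N : ℝ) + 1)) * dist y x := by gcongr
      linarith
    · intro h
      choose D hDV m hm using h
      obtain ⟨D₀, hD₀, g, hg, hlim⟩ := (isCompact_sphere (0 : E n) 1).tendsto_subseq
        (x := D) fun N => by simpa using hV N _ (hDV N)
      refine ⟨D₀, by simpa using hD₀, fun ε hε => ?_⟩
      have h0 : Tendsto (fun i => (K + 1) * (1 / ((g i : ℝ) + 1)) + K * ‖D (g i) - D₀‖) atTop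
          (𝓝 ((K + 1) * 0 + K * 0)) := by
        refine Tendsto.add (Tendsto.const_mul _ ?_) (Tendsto.const_mul _ ?_)
        · exact tendsto_one_div_add_atTop_nhds_zero_nat.comp hg.tendsto_atTop
        · exact tendsto_iff_norm_sub_tendsto_zero.1 hlim
      rw [mul_zero, mul_zero, add_zero] at h0
      obtain ⟨i, hi⟩ := (h0.eventually_lt_const hε).exists
      filter_upwards [ball_mem_nhds x (Nat.one_div_pos_of_nat (α := ℝ) (n := m (g i)))] with y hy
      refine (hswap D₀ (D (g i)) y).trans ?_
      have h1 := hm (g i) y (mem_ball.1 hy)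
      have h2 : ((K + 1) * (1 / ((g i : ℝ) + 1)) + K * ‖D (g i) - D₀‖) * dist y x ≤
          ε * dist y x := by gcongr
      linarith
  rw [← MeasurableSet.compl_iff, heq]
  exact MeasurableSet.iInter fun N => Finset.measurableSet_biUnion _ fun D _ =>
    MeasurableSet.iUnion fun m => (hF N D m).measurableSet

/-- A family of measurable sets has a countable subfamily covering each member almost
everywhere. -/
lemma exists_countable_ae_cover {Y : Type*} [MeasurableSpace Y] (μ : Measure Y) [SigmaFinite μ]
    {𝓕 : Set (Set Y)} (hne : 𝓕.Nonempty) (hm : ∀ A ∈ 𝓕, MeasurableSet A) :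
    ∃ g : ℕ → Set Y, (∀ k, g k ∈ 𝓕) ∧ ∀ A ∈ 𝓕, μ (A \ ⋃ k, g k) = 0 := by
  set ν := μ.toFinite
  let 𝒱 : Set ℝ≥0∞ := {a | ∃ g : ℕ → Set Y, (∀ k, g k ∈ 𝓕) ∧ a = ν (⋃ k, g k)}
  have h𝒱 : 𝒱.Nonempty := ⟨_, fun _ => hne.some, fun _ => hne.some_mem, rfl⟩
  obtain ⟨u, _, hu, hu𝒱⟩ := exists_seq_tendsto_sSup h𝒱 (OrderTop.bddAbove _)
  choose g hg hgu using hu𝒱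
  let G : ℕ → Set Y := fun k => g k.unpair.1 k.unpair.2
  have hGsup : ∀ i, (⋃ k, g i k) ⊆ ⋃ k, G k := by
    intro i
    refine iUnion_subset fun k => ?_
    refine subset_iUnion_of_subset (Nat.pair i k) ?_
    simp [G]
  have hsup : sSup 𝒱 ≤ ν (⋃ k, G k) :=
    le_of_tendsto' hu fun i => by rw [hgu]; exact measure_mono (hGsup i)
  refine ⟨G, fun k => hg _ _, fun A hA => ?_⟩
  refine absolutelyContinuous_toFinite μ ?_
  have h1 : ν (A ∪ ⋃ k, G k) ≤ ν (⋃ k, G k) := by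
    refine (le_sSup (a := ν (A ∪ ⋃ k, G k)) (s := 𝒱) ⟨fun k => Nat.casesOn k A G, ?_, ?_⟩).trans hsup
    · rintro (_ | k)
      · exact hA
      · exact hg _ _
    · congr 1
      ext x
      simp only [mem_union, mem_iUnion]
      constructor
      · rintro (hx | ⟨k, hx⟩)
        · exact ⟨0, hx⟩
        · exact ⟨k + 1, hx⟩
      · rintro ⟨_ | k, hx⟩
        · exact Or.inl hx
        · exact Or.inr ⟨k, hx⟩
  have hGm : MeasurableSet (⋃ k, G k) := MeasurableSet.iUnion fun k => hm _ (hg _ _)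
  have h2 := measure_sdiff_add_inter (μ := ν) (A ∪ ⋃ k, G k) hGm
  rw [union_sdiff_right, inter_eq_self_of_subset_right subset_union_right] at h2
  have h3 : ν (⋃ k, G k) ≠ ⊤ := measure_ne_top _ _
  rw [← h2] at h1
  by_contra h0
  exact (ENNReal.lt_add_right h3 h0).not_ge (by rwa [add_comm])

/-- The map `(φ, f)`. -/
def adjoin {Y : Type*} {n : ℕ} (φ : Y → E n) (f : Y → ℝ) (y : Y) : E (n + 1) :=
  WithLp.toLp 2 (Fin.snoc (α := fun _ => ℝ) (fun i => φ y i) (f y))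

lemma exists_lipschitzWith_adjoin {Y : Type*} [MetricSpace Y] {n : ℕ} {φ : Y → E n} {f : Y → ℝ}
    {K K' : ℝ≥0} (hφ : LipschitzWith K φ) (hf : LipschitzWith K' f) :
    ∃ L, LipschitzWith L (adjoin φ f) := by
  refine ⟨(n + 1 : ℕ) * (K + K'), LipschitzWith.of_dist_le_mul fun x y => ?_⟩
  rw [dist_eq_norm]
  have hd := dist_nonneg (x := x) (y := y)
  have h1 := hφ.dist_le_mul x y
  have h2 := hf.dist_le_mul x y
  rw [dist_eq_norm] at h1 h2
  refine (norm_le_of_forall_abs_le (R := (K + K') * dist x y) fun i => ?_).trans_eq ?_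
  · rw [PiLp.sub_apply]
    refine Fin.lastCases ?_ (fun i => ?_) i
    · simp only [adjoin, Fin.snoc_last]
      rw [Real.norm_eq_abs] at h2
      have : 0 ≤ K * dist x y := by positivity
      linarith
    · simp only [adjoin, Fin.snoc_castSucc]
      have h3 : |φ x i - φ y i| ≤ ‖φ x - φ y‖ := PiLp.norm_apply_le (φ x - φ y) i
      have : 0 ≤ K' * dist x y := by positivity
      linarith
  · push_cast; ring

lemma inner_adjoin {Y : Type*} {n : ℕ} (φ : Y → E n) (f : Y → ℝ) (D : E (n + 1)) (y : Y) :
    ⟪adjoin φ f y, D⟫ = ⟪φ y, WithLp.toLp 2 fun i => D (Fin.castSucc i)⟫ +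
      f y * D (Fin.last n) := by
  simp only [PiLp.inner_apply, Fin.sum_univ_castSucc, adjoin, Fin.snoc_castSucc, Fin.snoc_last]
  simp [mul_comm]

lemma FlatAt.const_mul {Y : Type*} [MetricSpace Y] {f : Y → ℝ} {x : Y} (hf : FlatAt f x) (c : ℝ) :
    FlatAt (fun y => c * f y) x := by
  intro ε hε
  have hc : 0 < |c| + 1 := by positivity
  filter_upwards [hf (ε / (|c| + 1)) (by positivity)] with y hy
  rw [← mul_sub, abs_mul]
  calc |c| * |f y - f x| ≤ (|c| + 1) * (ε / (|c| + 1) * dist y x) := by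
        gcongr
        linarith
    _ = ε * dist y x := by field_simp

lemma flatAt_iff_tendsto {Y : Type*} [MetricSpace Y] {f : Y → ℝ} {x : Y} :
    FlatAt f x ↔ Tendsto (fun y => |f y - f x| / dist y x) (𝓝[≠] x) (𝓝 0) := by
  rw [Metric.tendsto_nhds]
  constructor
  · intro h ε hε
    filter_upwards [nhdsWithin_le_nhds (h (ε / 2) (half_pos hε)), self_mem_nhdsWithin] with y hy hne
    have hd : 0 < dist y x := dist_pos.2 hne
    rw [Real.dist_eq, sub_zero, abs_of_nonneg (by positivity), div_lt_iff₀ hd]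
    exact lt_of_le_of_lt hy (by gcongr; linarith)
  · intro h ε hε
    filter_upwards [eventually_nhdsWithin_iff.1 (h ε hε)] with y hy
    rcases eq_or_ne y x with rfl | hne
    · simp
    have hd : 0 < dist y x := dist_pos.2 hne
    have := hy hne
    rw [Real.dist_eq, sub_zero, abs_of_nonneg (by positivity), div_lt_iff₀ hd] at this
    exact this.le

/-- A function which depends on `φ` to first order is differentiable at points of `ind φ`. -/
lemma diffWrtAt_of_mem_indSet {Y : Type*} [MetricSpace Y] {n : ℕ} {φ : Y → E n} {f : Y → ℝ}
    {K K' : ℝ≥0} (hφ : LipschitzWith K φ) (hf : LipschitzWith K' f) {x : Y} (hx : x ∈ indSet φ)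
    (hx' : x ∉ indSet (adjoin φ f)) : DiffWrtAt φ f x := by
  have hnot : ∀ a : E n, a ≠ 0 → ¬ FlatAt (fun y => ⟪φ y, a⟫) x := by
    intro a ha hflat
    refine (notMem_indSet_iff hφ x).2 ⟨(‖a‖⁻¹ : ℝ) • a, ?_, ?_⟩ hx
    · rw [norm_smul, norm_inv, norm_norm, inv_mul_cancel₀ (norm_ne_zero_iff.2 ha)]
    · simpa only [inner_smul_right] using hflat.const_mul ‖a‖⁻¹
  obtain ⟨L, hL⟩ := exists_lipschitzWith_adjoin hφ hf
  obtain ⟨D, hD, hflat⟩ := (notMem_indSet_iff hL x).1 hx'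
  simp only [inner_adjoin] at hflat
  set D' : E n := WithLp.toLp 2 fun i => D (Fin.castSucc i) with hD'
  have hlast : D (Fin.last n) ≠ 0 := by
    intro h0
    simp only [h0, mul_zero, add_zero] at hflat
    refine hnot D' (fun h => ?_) hflat
    have : D = 0 := by
      ext i
      refine Fin.lastCases h0 (fun i => ?_) i
      have := congrArg (fun z : E n => z i) h
      simpa [hD'] using this
    rw [this, norm_zero] at hD
    exact zero_ne_one hD
  have hchar : ∀ T : E n →ₗ[ℝ] ℝ, Tendsto (fun y => |f y - f x - T (φ y - φ x)| / dist y x)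
      (𝓝[≠] x) (𝓝 0) ↔ FlatAt (fun y => f y - T (φ y)) x := by
    intro T
    rw [flatAt_iff_tendsto]
    refine iff_of_eq (congrArg (fun g => Tendsto g _ _) (funext fun y => ?_))
    rw [map_sub]
    congr 2
    ring
  have huniq : ∀ T T' : E n →ₗ[ℝ] ℝ, FlatAt (fun y => f y - T (φ y)) x →
      FlatAt (fun y => f y - T' (φ y)) x → T = T' := by
    intro T T' hT hT'
    by_contra hne
    let a : E n := (InnerProductSpace.toDual ℝ (E n)).symm (T - T').toContinuousLinearMap
    have ha : ∀ z, ⟪z, a⟫ = T z - T' z := fun z => by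
      rw [real_inner_comm, InnerProductSpace.toDual_symm_apply]; simp
    refine hnot a (fun h0 => hne (LinearMap.ext fun z => ?_)) ?_
    · have := ha z
      rw [h0, inner_zero_right] at this
      linarith
    · intro ε hε
      filter_upwards [hT (ε / 2) (half_pos hε), hT' (ε / 2) (half_pos hε)] with y h1 h2
      rw [ha, ha]
      have h3 := abs_sub ((f y - T' (φ y)) - (f x - T' (φ x))) ((f y - T (φ y)) - (f x - T (φ x)))
      have h4 : T (φ y) - T' (φ y) - (T (φ x) - T' (φ x)) =
        ((f y - T' (φ y)) - (f x - T' (φ x))) - ((f y - T (φ y)) - (f x - T (φ x))) := by ring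
      rw [h4]
      linarith
  let T₀ : E n →ₗ[ℝ] ℝ := (-(D (Fin.last n))⁻¹) • (innerSL ℝ D').toLinearMap
  have hT₀ : FlatAt (fun y => f y - T₀ (φ y)) x := by
    have := hflat.const_mul (D (Fin.last n))⁻¹
    refine (congrArg (FlatAt · x) (funext fun y => ?_)).mp this
    simp only [T₀, LinearMap.smul_apply, ContinuousLinearMap.coe_coe, innerSL_apply_apply,
      smul_eq_mul, real_inner_comm]
    field_simp
    ring
  exact ⟨T₀, (hchar T₀).2 hT₀, fun T hT => huniq T T₀ ((hchar T).1 hT) hT₀⟩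

variable {X : Type*} [MetricSpace X] [CompleteSpace X] [TopologicalSpace.SeparableSpace X]
  [MeasurableSpace X] [BorelSpace X]

/-- If `dim_H X < ∞` and `μ(S ∩ ind φ) = 0` for every `n`, every
Lipschitz `φ : X → ℝⁿ` and every `S ∈ 𝒮(φ)`, then `(X,d,μ)` is a Lipschitz
differentiability space with chart dimensions at most `dim_H X`. -/
theorem lipDiff_of_singular_null (μ : Measure X) [SigmaFinite μ]
    (hdim : dimH (Set.univ : Set X) < ⊤)
    (h : ∀ (n : ℕ) (φ : X → E n), (∃ K, LipschitzWith K φ) →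
      ∀ S : Set X, MemScal φ S → μ (S ∩ indSet φ) = 0) :
    IsLipDiffSpaceWith μ (fun k => (k : ℝ≥0∞) ≤ dimH (Set.univ : Set X)) := by
  have hcov : ∀ n : ℕ, ∃ φ : ℕ → X → E n, (∀ k, ∃ K, LipschitzWith K (φ k)) ∧
      ∀ ψ : X → E n, (∃ K, LipschitzWith K ψ) → μ (indSet ψ \ ⋃ k, indSet (φ k)) = 0 := by
    intro n
    obtain ⟨g, hg, hg'⟩ := exists_countable_ae_cover μ
      (𝓕 := {A | ∃ ψ : X → E n, (∃ K, LipschitzWith K ψ) ∧ A = indSet ψ})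
      ⟨_, fun _ => 0, ⟨0, LipschitzWith.const 0⟩, rfl⟩ (by
        rintro _ ⟨ψ, ⟨K, hK⟩, rfl⟩
        exact measurableSet_indSet hK)
    choose φ hφ hgφ using hg
    refine ⟨φ, hφ, fun ψ hψ => ?_⟩
    simpa only [hgφ] using hg' _ ⟨ψ, hψ, rfl⟩
  choose φ hφ hmax using hcov
  set G : (n : ℕ) → Set X := fun n => ⋃ k, indSet (φ n k) with hG
  have hind : ∀ n k, MeasurableSet (indSet (φ n k)) := fun n k =>
    measurableSet_indSet (hφ n k).choose_spec
  have hGm : ∀ n, MeasurableSet (G n) := fun n => MeasurableSet.iUnion fun k => hind n k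
  have hG0 : G 0 = univ := by
    refine eq_univ_of_forall fun x => mem_iUnion.2 ⟨0, fun D hD => ?_⟩
    rw [Subsingleton.elim D 0, norm_zero] at hD
    exact absurd hD zero_ne_one
  have hGnull : ∀ n : ℕ, dimH (univ : Set X) < n → μ (G n) = 0 := by
    intro n hn
    have hn1 : 1 ≤ n := by
      rcases Nat.eq_zero_or_pos n with rfl | hn1
      · simp at hn
      · exact hn1
    refine measure_iUnion_null fun k => ?_
    obtain ⟨K, hK⟩ := hφ n k
    simpa using h n (φ n k) ⟨K, hK⟩ univ (memScal_univ hn1 hK hn)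
  let ι : Type := Option ({n : ℕ // (n : ℝ≥0∞) ≤ dimH (univ : Set X)} × ℕ)
  let U' : {n : ℕ // (n : ℝ≥0∞) ≤ dimH (univ : Set X)} × ℕ → Set X :=
    fun p => indSet (φ p.1 p.2) \ G (p.1 + 1)
  let N : ι → ℕ := fun i => i.elim 0 fun p => p.1
  let U : ι → Set X := fun i => i.elim (⋃ p, U' p)ᶜ U'
  let Φ : (i : ι) → X → E (N i) := fun i => match i with
    | none => fun _ => 0
    | some p => φ p.1 p.2
  have hU' : ∀ p, MeasurableSet (U' p) := fun p => (hind _ _).diff (hGm _)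
  have hleft : μ (⋃ p, U' p)ᶜ = 0 := by
    have hsub : (⋃ p, U' p)ᶜ ⊆ ⋃ n : {n : ℕ // dimH (univ : Set X) < n}, G n := by
      intro x hx
      by_contra hxG
      have hall : ∀ n, x ∈ G n := by
        intro n
        induction n with
        | zero => rw [hG0]; exact mem_univ x
        | succ n ih =>
          by_contra hn
          obtain ⟨k, hk⟩ := mem_iUnion.1 ih
          have hle : (n : ℝ≥0∞) ≤ dimH (univ : Set X) :=
            not_lt.1 fun hlt => hxG (mem_iUnion.2 ⟨⟨n, hlt⟩, ih⟩)
          exact hx (mem_iUnion.2 ⟨(⟨n, hle⟩, k), hk, hn⟩)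
      obtain ⟨n, hn⟩ := ENNReal.exists_nat_gt hdim.ne
      exact hxG (mem_iUnion.2 ⟨⟨n, hn⟩, hall n⟩)
    exact measure_mono_null hsub (measure_iUnion_null fun n => hGnull n n.2)
  have hN : ∀ o : ι, (N o : ℝ≥0∞) ≤ dimH (univ : Set X) := by
    rintro (_ | p)
    · simp [N]
    · exact p.1.2
  have hUm : ∀ o : ι, MeasurableSet (U o) := by
    rintro (_ | p)
    · exact (MeasurableSet.iUnion hU').compl
    · exact hU' p
  have hUcov : ∀ x, ∃ o : ι, x ∈ U o := by
    intro x
    by_cases hx : x ∈ ⋃ p, U' p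
    · obtain ⟨p, hp⟩ := mem_iUnion.1 hx
      exact ⟨some p, hp⟩
    · exact ⟨none, hx⟩
  have hΦ : ∀ o : ι, ∃ K, LipschitzWith K (Φ o) := by
    rintro (_ | p)
    · exact ⟨0, LipschitzWith.const 0⟩
    · exact hφ _ _
  have hdiff : ∀ f : X → ℝ, (∃ K, LipschitzWith K f) →
      ∀ o : ι, ∀ᵐ x ∂μ, x ∈ U o → DiffWrtAt (Φ o) f x := by
    rintro f ⟨K', hK'⟩ (_ | p)
    · filter_upwards [measure_eq_zero_iff_ae_notMem.1 hleft] with x hx hxU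
      exact absurd hxU hx
    · obtain ⟨K, hK⟩ := hφ p.1 p.2
      filter_upwards [measure_eq_zero_iff_ae_notMem.1
        (hmax _ _ (exists_lipschitzWith_adjoin hK hK'))] with x hx hxU
      exact diffWrtAt_of_mem_indSet hK hK' hxU.1 fun hxi => hx ⟨hxi, hxU.2⟩
  obtain ⟨e, he⟩ := exists_surjective_nat ι
  refine ⟨fun i => N (e i), fun i => U (e i), fun i => Φ (e i), fun i => hN _, fun i => hUm _,
    eq_univ_of_forall fun x => ?_, fun i => hΦ _, fun f hf i => hdiff f hf _⟩
  obtain ⟨o, ho⟩ := hUcov x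
  obtain ⟨i, rfl⟩ := he o
  exact mem_iUnion.2 ⟨i, ho⟩

end BKO
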